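/- Suppose 𝒳 is a compact metric space, φ:𝒳²→ℝ is continuous, H=K₂ is a single edge (so v=2), δ_□(W_{Q_n},W)→0 for some W∈𝒲, limsup_{n→∞}‖W_{Q_n}‖₁<∞, and ‖W‖₁<∞. Then both U_n(X) and V_n(X) satisfy a large deviation principle at speed n with the good rate function I₀(t) = inf{ D(ν|ρ) : ν ∈ 𝒯ℳ, D(ν|ρ) < ∞, T_{W,φ}(ν) = t }. -/

import Mathlib

open MeasureTheory Filter Set
open scoped ENNReal NNReal

noncomputable section

/-- The uniform probability measure on `[0,1]`. -/
def unif01 : Measure ℝ := volume.restrict (Set.Icc 0 1)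

instance : IsProbabilityMeasure unif01 :=
  ⟨by rw [unif01, Measure.restrict_apply_univ, Real.volume_Icc]; norm_num⟩

/-- The `L^r` norm (`r : ℝ≥0∞`) of a kernel, viewed as a function on `[0,1]²`. -/
def kerNorm (W : ℝ → ℝ → ℝ) (r : ℝ≥0∞) : ℝ≥0∞ :=
  eLpNorm (fun z : ℝ × ℝ => W z.1 z.2) r (unif01.prod unif01)

/-- The (strong) cut distance `d_□` between two kernels on `[0,1]²`. -/
def cutDist (W₁ W₂ : ℝ → ℝ → ℝ) : ℝ :=
  ⨆ S : {S : Set ℝ // MeasurableSet S}, ⨆ T : {T : Set ℝ // MeasurableSet T},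
    |∫ x in Set.Icc (0:ℝ) 1 ∩ S.1, ∫ y in Set.Icc (0:ℝ) 1 ∩ T.1, (W₁ x y - W₂ x y)|

/-- A Lebesgue-measure-preserving bijection of `[0,1]`. -/
def MPB (σ : ℝ → ℝ) : Prop :=
  Set.BijOn σ (Set.Icc 0 1) (Set.Icc 0 1) ∧ MeasurePreserving σ unif01 unif01

/-- The weak cut distance `δ_□`. -/
def weakCutDist (W₁ W₂ : ℝ → ℝ → ℝ) : ℝ :=
  ⨅ σ : {σ : ℝ → ℝ // MPB σ}, cutDist (fun x y => W₁ (σ.1 x) (σ.1 y)) W₂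

/-- The step kernel `W_{Q_n}` associated to an `n × n` matrix `Q`:
it equals `Q i j` when `⌈n x⌉ = i, ⌈n y⌉ = j`. -/
def stepKernel (n : ℕ) (Q : Fin n → Fin n → ℝ) : ℝ → ℝ → ℝ := fun x y =>
  ∑ i : Fin n, ∑ j : Fin n,
    if x ∈ Set.Ioc (((i : ℕ) : ℝ)/n) ((((i : ℕ) : ℝ)+1)/n) ∧
       y ∈ Set.Ioc (((j : ℕ) : ℝ)/n) ((((j : ℕ) : ℝ)+1)/n)
    then Q i j else 0

/-- Product over the edges of `H` (each edge counted once) of `f a b`. -/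
def edgeProd {v : ℕ} (G : SimpleGraph (Fin v)) [DecidableRel G.Adj]
    (f : Fin v → Fin v → ℝ) : ℝ :=
  ∏ p ∈ Finset.univ.filter (fun p : Fin v × Fin v => G.Adj p.1 p.2 ∧ p.1 < p.2), f p.1 p.2

/-- The number of edges `|E(H)|`. -/
def edgeCard {v : ℕ} (G : SimpleGraph (Fin v)) [DecidableRel G.Adj] : ℕ :=
  (Finset.univ.filter (fun p : Fin v × Fin v => G.Adj p.1 p.2 ∧ p.1 < p.2)).card

/-- The inhomogeneous U-statistic `U_n(X)` (sum over distinct indices). -/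
def Ustat {X : Type*} {v : ℕ} (G : SimpleGraph (Fin v)) [DecidableRel G.Adj]
    (φ : (Fin v → X) → ℝ) (n : ℕ) (Q : Fin n → Fin n → ℝ) (x : Fin n → X) : ℝ :=
  (∑ i ∈ Finset.univ.filter (fun i : Fin v → Fin n => Function.Injective i),
      φ (x ∘ i) * edgeProd G (fun a b => Q (i a) (i b))) / (n : ℝ) ^ v

/-- The inhomogeneous V-statistic `V_n(X)` (sum over all indices). -/
def Vstat {X : Type*} {v : ℕ} (G : SimpleGraph (Fin v)) [DecidableRel G.Adj]
    (φ : (Fin v → X) → ℝ) (n : ℕ) (Q : Fin n → Fin n → ℝ) (x : Fin n → X) : ℝ :=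
  (∑ i : Fin v → Fin n, φ (x ∘ i) * edgeProd G (fun a b => Q (i a) (i b))) / (n : ℝ) ^ v

open Classical in
/-- Kullback-Leibler divergence `D(ν | ρ) ∈ [0,∞]`. -/
def KLdiv {α : Type*} [MeasurableSpace α] (ν ρ : Measure α) : ℝ≥0∞ :=
  if ν ≪ ρ ∧ Integrable (llr ν ρ) ν then ENNReal.ofReal (∫ a, llr ν ρ a ∂ν) else ⊤

open Classical in
/-- `ν` itself if it is a probability measure, junk value `0` otherwise. -/
def probOr {α : Type*} [MeasurableSpace α] (ν : Measure α) : Measure α :=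
  if IsProbabilityMeasure ν then ν else 0

instance {α : Type*} [MeasurableSpace α] (ν : Measure α) : SigmaFinite (probOr ν) := by
  unfold probOr
  split_ifs with h
  · haveI := h; infer_instance
  · infer_instance

/-- `v`-fold product of a (probability) measure. -/
def piProb {α : Type*} [MeasurableSpace α] (v : ℕ) (ν : Measure α) : Measure (Fin v → α) :=
  Measure.pi fun _ => probOr ν

/-- The functional `T_{W,φ}(ν) = E[φ(B₁,…,B_v) ∏_{(a,b) ∈ E(H)} W(A_a,A_b)]`
for `(A_a,B_a)` i.i.d. with law `ν`. -/
def TWphi {X : Type*} [MeasurableSpace X] {v : ℕ} (G : SimpleGraph (Fin v))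
    [DecidableRel G.Adj] (W : ℝ → ℝ → ℝ) (φ : (Fin v → X) → ℝ)
    (ν : Measure (ℝ × X)) : ℝ :=
  ∫ z : Fin v → ℝ × X,
    φ (fun a => (z a).2) * edgeProd G (fun a b => W (z a).1 (z b).1) ∂(piProb v ν)

/-- Membership in `𝒯ℳ`: probability measures on `[0,1] × 𝒳` whose first marginal
is uniform on `[0,1]`. -/
def inTM {X : Type*} [MeasurableSpace X] (ν : Measure (ℝ × X)) : Prop :=
  IsProbabilityMeasure ν ∧ ν.map Prod.fst = unif01

/-- The rate function `I₀(t) = inf { D(ν|ρ) : ν ∈ 𝒯ℳ, D(ν|ρ) < ∞, T_{W,φ}(ν) = t }`. -/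
def rate0 {X : Type*} [MeasurableSpace X] {v : ℕ} (G : SimpleGraph (Fin v))
    [DecidableRel G.Adj] (W : ℝ → ℝ → ℝ) (φ : (Fin v → X) → ℝ) (μ : Measure X)
    (t : ℝ) : ℝ≥0∞ :=
  ⨅ ν : {ν : Measure (ℝ × X) //
      inTM ν ∧ KLdiv ν (unif01.prod μ) ≠ ⊤ ∧ TWphi G W φ ν = t},
    KLdiv ν.1 (unif01.prod μ)

/-- Tail assumption (T): `E_μ[e^{λ ψ(X)^p}] < ∞` for all `λ > 0`; for `p = ∞`
it means `ψ` is bounded. -/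
def TailCond {X : Type*} [MeasurableSpace X] (μ : Measure X) (ψ : X → ℝ)
    (p : ℝ≥0∞) : Prop :=
  if p = ⊤ then ∃ C : ℝ, ∀ x, ψ x ≤ C
  else ∀ lam : ℝ, 0 < lam →
    ∫⁻ x, ENNReal.ofReal (Real.exp (lam * ψ x ^ p.toReal)) ∂μ < ⊤

/-- A sequence of random elements `T n` defined on probability spaces `(Ω n, P n)`,
taking values in a topological space `E`, satisfies a large deviation principle at
speed `n` with good rate function `I`. -/
def SatisfiesLDP {E : Type*} [TopologicalSpace E] {Ω : ℕ → Type*}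
    [∀ n, MeasurableSpace (Ω n)] (P : ∀ n, Measure (Ω n)) (T : ∀ n, Ω n → E)
    (I : E → ℝ≥0∞) : Prop :=
  (∀ c : ℝ≥0∞, c ≠ ⊤ → IsCompact {x | I x ≤ c}) ∧
  ∀ F : Set E, MeasurableSet[borel E] F →
    (-(⨅ x ∈ interior F, (I x : EReal)) ≤
      Filter.atTop.liminf fun n : ℕ =>
        (((n : ℝ)⁻¹ : ℝ) : EReal) * ENNReal.log (P n {ω | T n ω ∈ F})) ∧
    (Filter.atTop.limsup (fun n : ℕ =>
        (((n : ℝ)⁻¹ : ℝ) : EReal) * ENNReal.log (P n {ω | T n ω ∈ F})) ≤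
      -(⨅ x ∈ closure F, (I x : EReal)))

end
noncomputable section
open MeasureTheory Filter Set
open scoped ENNReal NNReal Topology

set_option linter.style.haveILetI false
set_option linter.unusedSectionVars false


namespace EdgeLDP

variable {X : Type*} [MeasurableSpace X]

/-- The functional in the two-variable form. -/
def TT (U : ℝ → ℝ → ℝ) (ψ : X → X → ℝ) (ν : Measure (ℝ × X)) : ℝ :=
  ∫ p : (ℝ × X) × (ℝ × X), ψ p.1.2 p.2.2 * U p.1.1 p.2.1 ∂(ν.prod ν)

lemma filter_edge (G : SimpleGraph (Fin 2)) [DecidableRel G.Adj]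
    (hK2 : ∀ a b : Fin 2, G.Adj a b ↔ a ≠ b) :
    Finset.univ.filter (fun p : Fin 2 × Fin 2 => G.Adj p.1 p.2 ∧ p.1 < p.2) = {(0, 1)} := by
  ext ⟨a, b⟩
  simp only [hK2, Finset.mem_filter, Finset.mem_univ, true_and, Finset.mem_singleton,
    Prod.mk.injEq]
  revert a b; decide

lemma edgeProd_eq (G : SimpleGraph (Fin 2)) [DecidableRel G.Adj]
    (hK2 : ∀ a b : Fin 2, G.Adj a b ↔ a ≠ b) (f : Fin 2 → Fin 2 → ℝ) :
    edgeProd G f = f 0 1 := by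
  unfold edgeProd
  rw [filter_edge G hK2, Finset.prod_singleton]

lemma TWphi_eq (G : SimpleGraph (Fin 2)) [DecidableRel G.Adj]
    (hK2 : ∀ a b : Fin 2, G.Adj a b ↔ a ≠ b) (W : ℝ → ℝ → ℝ) (φ : (Fin 2 → X) → ℝ)
    (ν : Measure (ℝ × X)) (hν : IsProbabilityMeasure ν) :
    TWphi G W φ ν = TT W (fun y y' => φ ![y, y']) ν := by
  unfold TWphi TT piProb
  have h1 : probOr ν = ν := by unfold probOr; rw [if_pos hν]
  simp only [h1, edgeProd_eq G hK2]
  have h := (measurePreserving_piFinTwo (fun _ : Fin 2 => ν))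
  rw [← h.integral_comp (MeasurableEquiv.piFinTwo _).measurableEmbedding]
  refine integral_congr_ae (Eventually.of_forall fun z => ?_)
  simp only [MeasurableEquiv.piFinTwo_apply]
  congr 2
  ext a; fin_cases a <;> rfl

lemma Vstat_eq {X : Type*} (G : SimpleGraph (Fin 2)) [DecidableRel G.Adj]
    (hK2 : ∀ a b : Fin 2, G.Adj a b ↔ a ≠ b) (φ : (Fin 2 → X) → ℝ) (n : ℕ)
    (Q : Fin n → Fin n → ℝ) (x : Fin n → X) :
    Vstat G φ n Q x = ∑ i, ∑ j, φ ![x i, x j] * Q i j / (n : ℝ) ^ 2 := by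
  unfold Vstat
  simp only [edgeProd_eq G hK2, ← Finset.sum_div]
  congr 1
  rw [← Fintype.sum_prod_type' (f := fun i j => φ ![x i, x j] * Q i j)]
  refine Fintype.sum_equiv (finTwoArrowEquiv _) _ _ fun i => ?_
  simp only [finTwoArrowEquiv_apply]
  congr 2
  ext a; fin_cases a <;> rfl

lemma Ustat_eq {X : Type*} (G : SimpleGraph (Fin 2)) [DecidableRel G.Adj]
    (hK2 : ∀ a b : Fin 2, G.Adj a b ↔ a ≠ b) (φ : (Fin 2 → X) → ℝ) (n : ℕ)
    (Q : Fin n → Fin n → ℝ) (hQ : ∀ i, Q i i = 0) (x : Fin n → X) :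
    Ustat G φ n Q x = Vstat G φ n Q x := by
  unfold Ustat Vstat
  congr 1
  apply Finset.sum_subset (Finset.filter_subset _ _)
  intro i _ hi
  rw [edgeProd_eq G hK2]
  have : i 0 = i 1 := by
    by_contra h
    apply hi
    simp only [Finset.mem_filter, Finset.mem_univ, true_and]
    intro a b hab
    fin_cases a <;> fin_cases b <;> simp_all
  rw [this, hQ, mul_zero]

/-- first marginal measure preserving -/
lemma inTM.mp {ν : Measure (ℝ × X)} (h : inTM ν) : MeasurePreserving Prod.fst ν unif01 :=
  ⟨measurable_fst, h.2⟩

lemma mp_pair {ν : Measure (ℝ × X)} (h : inTM ν) :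
    MeasurePreserving (fun p : (ℝ × X) × (ℝ × X) => (p.1.1, p.2.1)) (ν.prod ν)
      (unif01.prod unif01) := by
  have := h.1
  exact (inTM.mp h).prod (inTM.mp h)

lemma integrable_U {ν : Measure (ℝ × X)} (h : inTM ν) {U : ℝ → ℝ → ℝ}
    (hU : Integrable (Function.uncurry U) (unif01.prod unif01)) :
    Integrable (fun p : (ℝ × X) × (ℝ × X) => U p.1.1 p.2.1) (ν.prod ν) :=
  (mp_pair h).integrable_comp_of_integrable hU

lemma integral_abs_U {ν : Measure (ℝ × X)} (h : inTM ν) {U : ℝ → ℝ → ℝ}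
    (hU : Integrable (Function.uncurry U) (unif01.prod unif01)) :
    ∫ p : (ℝ × X) × (ℝ × X), |U p.1.1 p.2.1| ∂(ν.prod ν)
      = ∫ q, |Function.uncurry U q| ∂(unif01.prod unif01) := by
  have := mp_pair h
  rw [← this.map_eq, integral_map this.aemeasurable]
  · rfl
  · rw [this.map_eq]; exact hU.abs.aestronglyMeasurable

lemma integrable_psi_U {ν : Measure (ℝ × X)} (h : inTM ν) {U : ℝ → ℝ → ℝ}
    (hU : Integrable (Function.uncurry U) (unif01.prod unif01)) {ψ : X → X → ℝ}
    (hψ : Measurable (Function.uncurry ψ)) {C : ℝ} (hC : ∀ y y', |ψ y y'| ≤ C) :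
    Integrable (fun p : (ℝ × X) × (ℝ × X) => ψ p.1.2 p.2.2 * U p.1.1 p.2.1) (ν.prod ν) := by
  refine (integrable_U h hU).bdd_mul (c := C) ?_ ?_
  · exact (hψ.comp ((measurable_snd.comp measurable_fst).prodMk
      (measurable_snd.comp measurable_snd))).aestronglyMeasurable
  · exact Eventually.of_forall fun p => hC _ _

lemma abs_TT_le {ν : Measure (ℝ × X)} (h : inTM ν) {U : ℝ → ℝ → ℝ}
    (hU : Integrable (Function.uncurry U) (unif01.prod unif01)) {ψ : X → X → ℝ}
    {C : ℝ} (hC : ∀ y y', |ψ y y'| ≤ C) :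
    |TT U ψ ν| ≤ C * ∫ q, |Function.uncurry U q| ∂(unif01.prod unif01) := by
  unfold TT
  rw [← integral_abs_U h hU, ← integral_const_mul]
  have hb := (integrable_U h hU).abs.const_mul C
  rw [← Real.norm_eq_abs]
  refine norm_integral_le_of_norm_le hb (Eventually.of_forall fun p => ?_)
  rw [norm_mul]
  exact mul_le_mul_of_nonneg_right (hC _ _) (abs_nonneg _)

lemma TT_sub_U {ν : Measure (ℝ × X)} (h : inTM ν) {U U' : ℝ → ℝ → ℝ}
    (hU : Integrable (Function.uncurry U) (unif01.prod unif01))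
    (hU' : Integrable (Function.uncurry U') (unif01.prod unif01)) {ψ : X → X → ℝ}
    (hψ : Measurable (Function.uncurry ψ)) {C : ℝ} (hC : ∀ y y', |ψ y y'| ≤ C) :
    TT U ψ ν - TT U' ψ ν = TT (fun x y => U x y - U' x y) ψ ν := by
  unfold TT
  rw [← integral_sub (integrable_psi_U h hU hψ hC) (integrable_psi_U h hU' hψ hC)]
  congr 1; ext p; ring

lemma TT_sub_psi {ν : Measure (ℝ × X)} (h : inTM ν) {U : ℝ → ℝ → ℝ}
    (hU : Integrable (Function.uncurry U) (unif01.prod unif01)) {ψ ψ' : X → X → ℝ}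
    (hψ : Measurable (Function.uncurry ψ)) {C : ℝ} (hC : ∀ y y', |ψ y y'| ≤ C)
    (hψ' : Measurable (Function.uncurry ψ')) {C' : ℝ} (hC' : ∀ y y', |ψ' y y'| ≤ C') :
    TT U ψ ν - TT U ψ' ν = TT U (fun x y => ψ x y - ψ' x y) ν := by
  unfold TT
  rw [← integral_sub (integrable_psi_U h hU hψ hC) (integrable_psi_U h hU hψ' hC')]
  congr 1; ext p; ring

/-! ### The cut-norm lemma -/

lemma weight_le {ν : Measure (ℝ × X)} (h : inTM ν) {l : ℝ → ℝ} (hl : Measurable l)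
    (hli : Integrable l unif01) {b : ℝ × X → ℝ} (hb : Measurable b)
    (hb0 : ∀ z, 0 ≤ b z) (hb1 : ∀ z, b z ≤ 1) :
    ∫ z, b z * l z.1 ∂ν ≤ ∫ u in {u | 0 < l u}, l u ∂unif01 := by
  have hS : MeasurableSet {u | 0 < l u} := measurableSet_lt measurable_const hl
  rw [← integral_indicator hS]
  have hmp := inTM.mp h
  have e : ∫ u, ({u | 0 < l u}).indicator l u ∂unif01
      = ∫ z, ({u | 0 < l u}).indicator l z.1 ∂ν := by
    rw [← hmp.map_eq, integral_map hmp.aemeasurable]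
    exact (hl.indicator hS).aestronglyMeasurable
  rw [e]
  have hi : Integrable (fun z : ℝ × X => l z.1) ν := hmp.integrable_comp_of_integrable hli
  refine integral_mono ?_ ?_ fun z => ?_
  · refine hi.bdd_mul (c := 1) hb.aestronglyMeasurable (Eventually.of_forall fun z => ?_)
    rw [Real.norm_eq_abs, abs_of_nonneg (hb0 z)]; exact hb1 z
  · exact hmp.integrable_comp_of_integrable (hli.indicator hS)
  · by_cases hz : 0 < l z.1
    · simp only [indicator, mem_ofPred_eq, hz, if_true]
      have := hb1 z; nlinarith
    · simp only [indicator, mem_ofPred_eq, hz, if_false]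
      have := hb0 z; push Not at hz; nlinarith

lemma cut_weight_le {ν : Measure (ℝ × X)} (h : inTM ν) {U : ℝ → ℝ → ℝ}
    (hUm : Measurable (Function.uncurry U))
    (hU : Integrable (Function.uncurry U) (unif01.prod unif01)) {κ : ℝ}
    (hκ : ∀ S T, MeasurableSet S → MeasurableSet T →
      ∫ x in S, ∫ y in T, U x y ∂unif01 ∂unif01 ≤ κ)
    {a b : ℝ × X → ℝ} (ha : Measurable a) (ha0 : ∀ z, 0 ≤ a z) (ha1 : ∀ z, a z ≤ 1)
    (hb : Measurable b) (hb0 : ∀ z, 0 ≤ b z) (hb1 : ∀ z, b z ≤ 1) :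
    ∫ p : (ℝ × X) × (ℝ × X), a p.1 * b p.2 * U p.1.1 p.2.1 ∂(ν.prod ν) ≤ κ := by
  have := h.1
  have hmp := inTM.mp h
  -- integrability on mixed space
  have hUmix : Integrable (fun p : ℝ × (ℝ × X) => U p.1 p.2.1) (unif01.prod ν) :=
    ((MeasurePreserving.id unif01).prod hmp).integrable_comp_of_integrable hU
  have hUmixb : Integrable (fun p : ℝ × (ℝ × X) => b p.2 * U p.1 p.2.1) (unif01.prod ν) := by
    refine hUmix.bdd_mul (c := 1) (hb.comp measurable_snd).aestronglyMeasurable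
      (Eventually.of_forall fun z => ?_)
    rw [Real.norm_eq_abs, abs_of_nonneg (hb0 _)]; exact hb1 _
  have hitg : Integrable (fun p : (ℝ × X) × (ℝ × X) => a p.1 * b p.2 * U p.1.1 p.2.1)
      (ν.prod ν) := by
    refine (integrable_U h hU).bdd_mul (c := 1)
      ((ha.comp measurable_fst).mul (hb.comp measurable_snd)).aestronglyMeasurable
      (Eventually.of_forall fun z => ?_)
    rw [Real.norm_eq_abs, abs_of_nonneg (mul_nonneg (ha0 _) (hb0 _))]
    exact mul_le_one₀ (ha1 _) (hb0 _) (hb1 _)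
  set k : ℝ → ℝ := fun u => ∫ z, b z * U u z.1 ∂ν with hk
  have hkm : Measurable k := by
    have : StronglyMeasurable (fun p : ℝ × (ℝ × X) => b p.2 * U p.1 p.2.1) := by
      apply Measurable.stronglyMeasurable
      exact (hb.comp measurable_snd).mul
        (hUm.comp (measurable_fst.prodMk (measurable_fst.comp measurable_snd)))
    exact this.integral_prod_right.measurable
  have hki : Integrable k unif01 := hUmixb.integral_prod_left
  rw [integral_prod _ hitg]
  have e1 : ∀ z : ℝ × X, ∫ z', a z * b z' * U z.1 z'.1 ∂ν = a z * k z.1 := by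
    intro z
    rw [hk, ← integral_const_mul]
    congr 1; ext z'; ring
  simp only [e1]
  refine (weight_le h hkm hki ha ha0 ha1).trans ?_
  set S := {u | 0 < k u}
  have hS : MeasurableSet S := measurableSet_lt measurable_const hkm
  set l : ℝ → ℝ := fun y => ∫ x in S, U x y ∂unif01 with hl
  have hres : (unif01.restrict S).prod ν ≤ unif01.prod ν :=
    Measure.prod_mono Measure.restrict_le_self le_rfl
  have hres' : (unif01.restrict S).prod unif01 ≤ unif01.prod unif01 :=
    Measure.prod_mono Measure.restrict_le_self le_rfl
  have hlm : Measurable l := by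
    have : StronglyMeasurable (Function.uncurry U) := hUm.stronglyMeasurable
    exact this.integral_prod_left.measurable
  have hli : Integrable l unif01 := (hU.mono_measure hres').integral_prod_right
  have e2 : ∫ u in S, k u ∂unif01 = ∫ z, b z * l z.1 ∂ν := by
    rw [hk, integral_integral_swap]
    · congr 1; ext z
      rw [hl, ← integral_const_mul]
    · exact hUmixb.mono_measure hres
  rw [e2]
  refine (weight_le h hlm hli hb hb0 hb1).trans ?_
  set T := {u | 0 < l u}
  have hT : MeasurableSet T := measurableSet_lt measurable_const hlm
  rw [hl, integral_integral_swap]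
  · exact hκ S T hS hT
  · have : (unif01.restrict T).prod (unif01.restrict S) ≤ unif01.prod unif01 :=
      Measure.prod_mono Measure.restrict_le_self Measure.restrict_le_self
    exact (hU.swap).mono_measure this

lemma cut_weight_abs_le {ν : Measure (ℝ × X)} (h : inTM ν) {U : ℝ → ℝ → ℝ}
    (hUm : Measurable (Function.uncurry U))
    (hU : Integrable (Function.uncurry U) (unif01.prod unif01)) {κ : ℝ}
    (hκ : ∀ S T, MeasurableSet S → MeasurableSet T →
      |∫ x in S, ∫ y in T, U x y ∂unif01 ∂unif01| ≤ κ)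
    {a b : ℝ × X → ℝ} (ha : Measurable a) (ha0 : ∀ z, 0 ≤ a z) (ha1 : ∀ z, a z ≤ 1)
    (hb : Measurable b) (hb0 : ∀ z, 0 ≤ b z) (hb1 : ∀ z, b z ≤ 1) :
    |∫ p : (ℝ × X) × (ℝ × X), a p.1 * b p.2 * U p.1.1 p.2.1 ∂(ν.prod ν)| ≤ κ := by
  rw [abs_le]
  constructor
  · have := cut_weight_le h (U := fun x y => - U x y) hUm.neg hU.neg (κ := κ) ?_
      ha ha0 ha1 hb hb0 hb1
    · simp only [mul_neg, integral_neg] at this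
      linarith
    · intro S T hS hT
      simp only [integral_neg]
      exact (neg_le_abs _).trans (hκ S T hS hT)
  · exact cut_weight_le h hUm hU (fun S T hS hT => (le_abs_self _).trans (hκ S T hS hT))
      ha ha0 ha1 hb hb0 hb1

end EdgeLDP
end

noncomputable section
open MeasureTheory Filter Set
open scoped ENNReal NNReal Topology

set_option linter.style.haveILetI false
set_option linter.unusedSectionVars false


namespace EdgeLDP

lemma exists_simpleFunc_close (X : Type*) [MetricSpace X] [CompactSpace X] [MeasurableSpace X]
    [BorelSpace X] [Nonempty X] {δ : ℝ} (hδ : 0 < δ) :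
    ∃ π : SimpleFunc X X, ∀ x, dist (π x) x < δ := by
  have hcov : (univ : Set X) ⊆ ⋃ k : ℕ, Metric.ball (TopologicalSpace.denseSeq X k) δ := by
    intro x _
    obtain ⟨k, hk⟩ := (TopologicalSpace.denseRange_denseSeq X).exists_dist_lt x hδ
    exact mem_iUnion.2 ⟨k, hk⟩
  obtain ⟨t, ht⟩ := isCompact_univ.elim_finite_subcover _ (fun k => Metric.isOpen_ball) hcov
  refine ⟨SimpleFunc.nearestPt (TopologicalSpace.denseSeq X) (t.sup id), fun x => ?_⟩
  obtain ⟨k, hk, hx⟩ := mem_iUnion₂.1 (ht (mem_univ x))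
  have h1 := SimpleFunc.edist_nearestPt_le (TopologicalSpace.denseSeq X) x
    (Finset.le_sup (f := id) hk)
  rw [edist_dist, edist_dist] at h1
  have h2 := (ENNReal.ofReal_le_ofReal_iff dist_nonneg).1 h1
  refine h2.trans_lt ?_
  rw [dist_comm]; exact hx

variable {X : Type*} [MetricSpace X] [CompactSpace X] [MeasurableSpace X] [BorelSpace X]

lemma measurable_psi {ψ : X → X → ℝ} (hψ : Continuous (Function.uncurry ψ)) :
    Measurable (Function.uncurry ψ) := hψ.measurable

lemma exists_bound_psi {ψ : X → X → ℝ} (hψ : Continuous (Function.uncurry ψ)) :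
    ∃ C, 0 ≤ C ∧ ∀ y y', |ψ y y'| ≤ C := by
  obtain ⟨C, hC⟩ := isCompact_univ.exists_bound_of_continuousOn hψ.continuousOn
  refine ⟨max C 0, le_max_right _ _, fun y y' => ?_⟩
  exact (hC (y, y') (mem_univ _)).trans (le_max_left _ _)

lemma cut_TT [Nonempty X] {ψ : X → X → ℝ} (hψ : Continuous (Function.uncurry ψ)) {ε : ℝ}
    (hε : 0 < ε) :
    ∃ K : ℝ, 0 ≤ K ∧ ∀ (ν : Measure (ℝ × X)) (_ : inTM ν) (U : ℝ → ℝ → ℝ)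
      (_ : Measurable (Function.uncurry U))
      (_ : Integrable (Function.uncurry U) (unif01.prod unif01)) (κ : ℝ)
      (_ : ∀ S T, MeasurableSet S → MeasurableSet T →
        |∫ x in S, ∫ y in T, U x y ∂unif01 ∂unif01| ≤ κ),
      |TT U ψ ν| ≤ ε * (∫ q, |Function.uncurry U q| ∂(unif01.prod unif01)) + K * κ := by
  obtain ⟨C, hC0, hC⟩ := exists_bound_psi hψ
  have huc : UniformContinuous (Function.uncurry ψ) :=
    CompactSpace.uniformContinuous_of_continuous hψ
  obtain ⟨δ, hδ, hd⟩ := Metric.uniformContinuous_iff.1 huc ε hε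
  obtain ⟨π, hπ⟩ := exists_simpleFunc_close X hδ
  refine ⟨(π.range.card : ℝ) * (π.range.card * C), by positivity, ?_⟩
  intro ν hν U hUm hU κ hκ
  have := hν.1
  have hκ0 : 0 ≤ κ := (abs_nonneg _).trans (hκ ∅ ∅ .empty .empty)
  set ψ' : X → X → ℝ := fun y y' => ψ (π y) (π y') with hψ'
  have hm' : Measurable (Function.uncurry ψ') :=
    hψ.measurable.comp ((π.measurable.comp measurable_fst).prodMk
      (π.measurable.comp measurable_snd))
  have h1 := TT_sub_psi hν hU hψ.measurable hC hm' (C' := C) (fun y y' => hC _ _)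
  have h2 : |TT U (fun x y => ψ x y - ψ' x y) ν| ≤
      ε * (∫ q, |Function.uncurry U q| ∂(unif01.prod unif01)) := by
    apply abs_TT_le hν hU
    intro y y'
    have : dist ((y, y') : X × X) (π y, π y') < δ := by
      rw [Prod.dist_eq, max_lt_iff, dist_comm y, dist_comm y']
      exact ⟨hπ y, hπ y'⟩
    exact (hd this).le
  have hfin : ∀ y y', ψ' y y' = ∑ c ∈ π.range, ∑ d ∈ π.range,
      ψ c d * ((π ⁻¹' {c}).indicator (fun _ => (1:ℝ)) y *
        (π ⁻¹' {d}).indicator (fun _ => (1:ℝ)) y') := by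
    intro y y'
    rw [Finset.sum_eq_single (π y), Finset.sum_eq_single (π y')]
    · simp [hψ']
    · intro d _ hd
      simp [indicator, hd.symm]
    · intro h; exact absurd (π.mem_range_self y') h
    · intro c _ hc
      simp [indicator, hc.symm]
    · intro h; exact absurd (π.mem_range_self y) h
  have hind : ∀ c, Measurable (fun z : ℝ × X => (π ⁻¹' {c}).indicator (fun _ => (1:ℝ)) z.2) :=
    fun c => (measurable_const.indicator (π.measurableSet_fiber c)).comp measurable_snd
  have hi0 : ∀ (c : X) (y : X), 0 ≤ (π ⁻¹' {c}).indicator (fun _ => (1:ℝ)) y :=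
    fun c y => indicator_nonneg (fun _ _ => zero_le_one) y
  have hi1 : ∀ (c : X) (y : X), (π ⁻¹' {c}).indicator (fun _ => (1:ℝ)) y ≤ 1 :=
    fun c y => indicator_le_self' (fun _ _ => zero_le_one) y
  have h3 : |TT U ψ' ν| ≤ (π.range.card : ℝ) * (π.range.card * C) * κ := by
    have e : TT U ψ' ν = ∑ c ∈ π.range, ∑ d ∈ π.range, ψ c d *
        ∫ p : (ℝ × X) × (ℝ × X), (π ⁻¹' {c}).indicator (fun _ => (1:ℝ)) p.1.2 *
          (π ⁻¹' {d}).indicator (fun _ => (1:ℝ)) p.2.2 * U p.1.1 p.2.1 ∂(ν.prod ν) := by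
      have hitg : ∀ c d, Integrable (fun p : (ℝ × X) × (ℝ × X) =>
          ψ c d * ((π ⁻¹' {c}).indicator (fun _ => (1:ℝ)) p.1.2 *
          (π ⁻¹' {d}).indicator (fun _ => (1:ℝ)) p.2.2 * U p.1.1 p.2.1)) (ν.prod ν) := by
        intro c d
        apply Integrable.const_mul
        refine (integrable_U hν hU).bdd_mul (c := 1)
          (((hind c).comp measurable_fst).mul ((hind d).comp measurable_snd)).aestronglyMeasurable
          (Eventually.of_forall fun z => ?_)
        rw [Real.norm_eq_abs, abs_of_nonneg (mul_nonneg (hi0 _ _) (hi0 _ _))]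
        exact mul_le_one₀ (hi1 _ _) (hi0 _ _) (hi1 _ _)
      unfold TT
      simp only [← integral_const_mul]
      rw [Finset.sum_congr rfl fun c _ => (integral_finsetSum _ fun d _ => hitg c d).symm,
        ← integral_finsetSum _ fun c _ => integrable_finsetSum _ fun d _ => hitg c d]
      congr 1; ext p
      rw [hfin, Finset.sum_mul]
      refine Finset.sum_congr rfl fun c _ => ?_
      rw [Finset.sum_mul]
      refine Finset.sum_congr rfl fun d _ => ?_
      ring
    rw [e]
    refine (Finset.abs_sum_le_sum_abs _ _).trans ?_
    have : ∀ c ∈ π.range, |∑ d ∈ π.range, ψ c d *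
        ∫ p : (ℝ × X) × (ℝ × X), (π ⁻¹' {c}).indicator (fun _ => (1:ℝ)) p.1.2 *
          (π ⁻¹' {d}).indicator (fun _ => (1:ℝ)) p.2.2 * U p.1.1 p.2.1 ∂(ν.prod ν)|
        ≤ π.range.card * C * κ := by
      intro c _
      refine (Finset.abs_sum_le_sum_abs _ _).trans ?_
      have h5 : ∀ d ∈ π.range, |ψ c d *
        ∫ p : (ℝ × X) × (ℝ × X), (π ⁻¹' {c}).indicator (fun _ => (1:ℝ)) p.1.2 *
          (π ⁻¹' {d}).indicator (fun _ => (1:ℝ)) p.2.2 * U p.1.1 p.2.1 ∂(ν.prod ν)|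
        ≤ C * κ := by
        intro d _
        rw [abs_mul]
        exact mul_le_mul (hC _ _) (cut_weight_abs_le hν hUm hU hκ (hind c) (fun _ => hi0 _ _)
          (fun _ => hi1 _ _) (hind d) (fun _ => hi0 _ _)
          (fun _ => hi1 _ _)) (abs_nonneg _) hC0
      refine (Finset.sum_le_card_nsmul _ _ _ h5).trans (le_of_eq ?_)
      rw [nsmul_eq_mul]; ring
    refine (Finset.sum_le_card_nsmul _ _ _ this).trans (le_of_eq ?_)
    rw [nsmul_eq_mul]; ring
  have : TT U ψ ν = TT U (fun x y => ψ x y - ψ' x y) ν + TT U ψ' ν := by linarith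
  rw [this]
  exact (abs_add_le _ _).trans (add_le_add h2 h3)

end EdgeLDP
end

noncomputable section
open MeasureTheory Filter Set
open scoped ENNReal NNReal Topology BoundedContinuousFunction

set_option linter.style.haveILetI false
set_option linter.unusedSectionVars false


namespace EdgeLDP

/-- submonoid of elementary tensors -/
def tensMonoid (Z : Type*) [TopologicalSpace Z] : Submonoid C(Z × Z, ℝ) where
  carrier := {h | ∃ f g : C(Z, ℝ), ∀ p, h p = f p.1 * g p.2}
  one_mem' := ⟨1, 1, fun p => by simp⟩
  mul_mem' := by
    rintro a b ⟨f, g, h⟩ ⟨f', g', h'⟩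
    exact ⟨f * f', g * g', fun p => by simp [h, h']; ring⟩

lemma tensor_approx (Z : Type*) [MetricSpace Z] [CompactSpace Z] (F : C(Z × Z, ℝ)) {ε : ℝ}
    (hε : 0 < ε) :
    ∃ (m : ℕ) (f g : Fin m → C(Z, ℝ)), ∀ z z', |F (z, z') - ∑ l, f l z * g l z'| < ε := by
  set A : Subalgebra ℝ C(Z × Z, ℝ) := Algebra.adjoin ℝ (tensMonoid Z : Set C(Z × Z, ℝ)) with hA
  have hsep : A.SeparatesPoints := by
    rintro ⟨z, z'⟩ ⟨w, w'⟩ hne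
    by_cases h : z = w
    · have h' : z' ≠ w' := fun h'' => hne (by rw [h, h''])
      let g : C(Z, ℝ) := ⟨fun u => dist z' u, by fun_prop⟩
      refine ⟨_, ⟨g.comp ⟨Prod.snd, continuous_snd⟩, ?_, rfl⟩, ?_⟩
      · exact Algebra.subset_adjoin ⟨1, g, fun p => by simp⟩
      · simp [g, eq_comm]
        exact h'
    · let g : C(Z, ℝ) := ⟨fun u => dist z u, by fun_prop⟩
      refine ⟨_, ⟨g.comp ⟨Prod.fst, continuous_fst⟩, ?_, rfl⟩, ?_⟩
      · exact Algebra.subset_adjoin ⟨g, 1, fun p => by simp⟩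
      · simp [g, eq_comm]
        exact h
  obtain ⟨⟨a, haA⟩, ha⟩ :=
    ContinuousMap.exists_mem_subalgebra_near_continuousMap_of_separatesPoints A hsep F ε hε
  have hspan : a ∈ Submodule.span ℝ (tensMonoid Z : Set C(Z × Z, ℝ)) := by
    have : a ∈ Subalgebra.toSubmodule A := haA
    rw [hA, Algebra.adjoin_eq_span, Submonoid.closure_eq] at this
    exact this
  obtain ⟨m, c, t, ht⟩ := Submodule.mem_span_set'.1 hspan
  choose f g hfg using fun l => (t l).2
  refine ⟨m, fun l => c l • f l, g, fun z z' => ?_⟩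
  have h1 : ∑ l, (c l • f l) z * g l z' = a (z, z') := by
    rw [← ht]
    simp only [ContinuousMap.coe_sum, Finset.sum_apply, ContinuousMap.smul_apply, smul_eq_mul]
    refine Finset.sum_congr rfl fun l _ => ?_
    rw [hfg l (z, z')]; ring
  rw [h1]
  have h2 := ContinuousMap.norm_coe_le_norm (a - F) (z, z')
  rw [abs_sub_comm]
  exact (h2.trans_lt ha)

variable {X : Type*} [MetricSpace X] [CompactSpace X] [MeasurableSpace X] [BorelSpace X]

/-- projection of `ℝ × X` onto the compact box -/
def prj (z : ℝ × X) : (Icc (0:ℝ) 1) × X := (projIcc 0 1 zero_le_one z.1, z.2)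

lemma continuous_prj : Continuous (prj (X := X)) :=
  (continuous_projIcc.comp continuous_fst).prodMk continuous_snd

lemma ae_mem_Icc {ν : Measure (ℝ × X)} (h : inTM ν) : ∀ᵐ z ∂ν, z.1 ∈ Icc (0:ℝ) 1 := by
  have h1 : ∀ᵐ u ∂unif01, u ∈ Icc (0:ℝ) 1 := ae_restrict_mem measurableSet_Icc
  exact (inTM.mp h).quasiMeasurePreserving.ae h1

lemma tensor_TT {W : ℝ → ℝ → ℝ}
    (hW : Integrable (Function.uncurry W) (unif01.prod unif01))
    {ψ : X → X → ℝ} (hψ : Continuous (Function.uncurry ψ)) {ε : ℝ} (hε : 0 < ε) :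
    ∃ (m : ℕ) (f g : Fin m → (ℝ × X →ᵇ ℝ)), ∀ ν : Measure (ℝ × X), inTM ν →
      |TT W ψ ν - ∑ l, (∫ z, f l z ∂ν) * (∫ z, g l z ∂ν)| ≤ ε := by
  obtain ⟨C, hC0, hC⟩ := exists_bound_psi hψ
  have hε' : 0 < ε / (2 * (C + 1)) := by positivity
  obtain ⟨Wc, hWc, hWci⟩ := hW.exists_boundedContinuous_integral_sub_le hε'
  let F : C(((Icc (0:ℝ) 1) × X) × ((Icc (0:ℝ) 1) × X), ℝ) :=
    ⟨fun p => ψ p.1.2 p.2.2 * Wc (p.1.1, p.2.1), by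
      refine Continuous.mul ?_ ?_
      · exact hψ.comp ((continuous_snd.comp continuous_fst).prodMk
          (continuous_snd.comp continuous_snd))
      · exact Wc.continuous.comp (by fun_prop)⟩
  obtain ⟨m, f, g, hfg⟩ := tensor_approx ((Icc (0:ℝ) 1) × X) F (half_pos hε)
  refine ⟨m, fun l => (BoundedContinuousFunction.mkOfCompact (f l)).compContinuous
      ⟨prj, continuous_prj⟩,
    fun l => (BoundedContinuousFunction.mkOfCompact (g l)).compContinuous
      ⟨prj, continuous_prj⟩, fun ν hν => ?_⟩
  have := hν.1
  have h1 : |TT W ψ ν - TT (fun x y => Wc (x, y)) ψ ν| ≤ ε / 2 := by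
    rw [TT_sub_U (U' := fun x y => Wc (x, y)) hν hW hWci hψ.measurable hC]
    refine (abs_TT_le (U := fun x y => W x y - Wc (x, y)) hν (hW.sub hWci) hC).trans ?_
    have : (∫ q, |Function.uncurry (fun x y => W x y - Wc (x, y)) q| ∂(unif01.prod unif01))
      ≤ ε / (2 * (C + 1)) := hWc
    calc _ ≤ C * (ε / (2 * (C + 1))) := mul_le_mul_of_nonneg_left this hC0
      _ ≤ (C + 1) * (ε / (2 * (C + 1))) := by gcongr; linarith
      _ = ε / 2 := by field_simp
  have h2 : |TT (fun x y => Wc (x, y)) ψ ν - ∑ l, (∫ z, f l (prj z) ∂ν) * (∫ z, g l (prj z) ∂ν)|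
      ≤ ε / 2 := by
    have hbi : ∀ f : C((Icc (0:ℝ) 1) × X, ℝ), Integrable (fun z : ℝ × X => f (prj z)) ν := by
      intro f
      exact ((BoundedContinuousFunction.mkOfCompact f).compContinuous
        ⟨prj, continuous_prj⟩).integrable ν
    have hitg : ∀ l, Integrable (fun p : (ℝ × X) × (ℝ × X) => f l (prj p.1) * g l (prj p.2))
      (ν.prod ν) := fun l => (hbi (f l)).mul_prod (hbi (g l))
    have e : ∑ l, (∫ z, f l (prj z) ∂ν) * (∫ z, g l (prj z) ∂ν) =
        ∫ p : (ℝ × X) × (ℝ × X), ∑ l, f l (prj p.1) * g l (prj p.2) ∂(ν.prod ν) := by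
      rw [integral_finsetSum _ fun l _ => hitg l]
      refine Finset.sum_congr rfl fun l _ => ?_
      exact (integral_prod_mul (fun z => f l (prj z)) (fun z => g l (prj z))).symm
    rw [e]
    unfold TT
    rw [← integral_sub (integrable_psi_U (U := fun x y => Wc (x, y)) hν hWci hψ.measurable hC)
      (integrable_finsetSum _ fun l _ => hitg l)]
    rw [← Real.norm_eq_abs]
    have hae : ∀ᵐ p ∂(ν.prod ν), p.1.1 ∈ Icc (0:ℝ) 1 ∧ p.2.1 ∈ Icc (0:ℝ) 1 := by
      have a1 : ∀ᵐ p ∂(ν.prod ν), p.1.1 ∈ Icc (0:ℝ) 1 :=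
        Measure.quasiMeasurePreserving_fst.ae (ae_mem_Icc hν)
      have a2 : ∀ᵐ p ∂(ν.prod ν), p.2.1 ∈ Icc (0:ℝ) 1 :=
        Measure.quasiMeasurePreserving_snd.ae (ae_mem_Icc hν)
      exact a1.and a2
    have := norm_integral_le_of_norm_le_const (μ := ν.prod ν) (C := ε / 2)
      (f := fun p => ψ p.1.2 p.2.2 * Wc (p.1.1, p.2.1) - ∑ l, f l (prj p.1) * g l (prj p.2)) ?_
    · simpa using this
    · filter_upwards [hae] with p hp
      have h3 := (hfg (prj p.1) (prj p.2)).le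
      have h4 : F (prj p.1, prj p.2) = ψ p.1.2 p.2.2 * Wc (p.1.1, p.2.1) := by
        simp only [F, prj, ContinuousMap.coe_mk, projIcc_of_mem zero_le_one hp.1,
          projIcc_of_mem zero_le_one hp.2]
      rw [h4] at h3
      exact h3
  have h3 := abs_add_le (TT W ψ ν - TT (fun x y => Wc (x, y)) ψ ν)
    (TT (fun x y => Wc (x, y)) ψ ν - ∑ l, (∫ z, f l (prj z) ∂ν) * (∫ z, g l (prj z) ∂ν))
  rw [sub_add_sub_cancel] at h3
  refine h3.trans ?_
  linarith

/-- `𝒯ℳ` inside the space of probability measures -/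
def TMset (X : Type*) [MeasurableSpace X] : Set (ProbabilityMeasure (ℝ × X)) :=
  {ν | inTM (ν : Measure (ℝ × X))}

lemma isCompact_TMset : IsCompact (TMset X) := by
  let u : ProbabilityMeasure ℝ := ⟨unif01, inferInstance⟩
  have hcl : IsClosed (TMset X) := by
    have : TMset X = (fun ν : ProbabilityMeasure (ℝ × X) =>
        ν.map (measurable_fst (α := ℝ) (β := X)).aemeasurable) ⁻¹' {u} := by
      ext ν
      simp only [TMset, inTM, mem_preimage, mem_singleton_iff, mem_ofPred_eq]
      constructor
      · intro h; exact Subtype.ext h.2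
      · intro h; exact ⟨inferInstance, congrArg (fun κ : ProbabilityMeasure ℝ => (κ : Measure ℝ)) h⟩
    rw [this]
    exact isClosed_singleton.preimage (ProbabilityMeasure.continuous_map continuous_fst)
  have ht := isCompact_closure_of_isTightMeasureSet (S := TMset X) ?_
  · rwa [hcl.closure_eq] at ht
  · rw [isTightMeasureSet_iff_exists_isCompact_measure_compl_le]
    intro ε hε
    refine ⟨Icc (0:ℝ) 1 ×ˢ univ, isCompact_Icc.prod isCompact_univ, ?_⟩
    rintro _ ⟨ν, hν, rfl⟩
    have h0 : (ν : Measure (ℝ × X)) (Icc (0:ℝ) 1 ×ˢ univ)ᶜ = 0 := by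
      have := ae_mem_Icc (show inTM (ν : Measure (ℝ × X)) from hν)
      rw [ae_iff] at this
      convert this using 2
      ext z; simp
    rw [h0]; exact zero_le

lemma continuousOn_TT {W : ℝ → ℝ → ℝ}
    (hW : Integrable (Function.uncurry W) (unif01.prod unif01))
    {ψ : X → X → ℝ} (hψ : Continuous (Function.uncurry ψ)) :
    ContinuousOn (fun ν : ProbabilityMeasure (ℝ × X) => TT W ψ (ν : Measure (ℝ × X)))
      (TMset X) := by
  intro ν₀ h₀
  rw [ContinuousWithinAt, Metric.tendsto_nhds]
  intro ε hε
  obtain ⟨m, f, g, h⟩ := tensor_TT hW hψ (show 0 < ε / 4 by positivity)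
  have hc : Continuous (fun ν : ProbabilityMeasure (ℝ × X) =>
      ∑ l, (∫ z, f l z ∂(ν : Measure (ℝ × X))) * (∫ z, g l z ∂(ν : Measure (ℝ × X)))) := by
    refine continuous_finsetSum _ fun l _ => Continuous.mul ?_ ?_
    · exact ProbabilityMeasure.continuous_integral_boundedContinuousFunction (f l)
    · exact ProbabilityMeasure.continuous_integral_boundedContinuousFunction (g l)
  have h1 := (Metric.tendsto_nhds.1 (hc.tendsto ν₀)) (ε / 4) (by positivity)
  filter_upwards [nhdsWithin_le_nhds h1, self_mem_nhdsWithin] with ν h2 h3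
  have a := h ν h3
  have b := h ν₀ h₀
  rw [Real.dist_eq] at h2 ⊢
  rw [abs_le] at a b
  rw [abs_lt] at h2 ⊢
  constructor <;> linarith [a.1, a.2, b.1, b.2, h2.1, h2.2]

end EdgeLDP
end

noncomputable section
open MeasureTheory Filter Set
open scoped ENNReal NNReal Topology BoundedContinuousFunction
set_option linter.style.haveILetI false
set_option linter.unusedSectionVars false
namespace EdgeLDP

/-! ### Donsker-Varadhan -/

section DV
variable {α : Type*} [MeasurableSpace α] {ν ρ : Measure α}

lemma KLdiv_eq_klDiv [IsProbabilityMeasure ν] [IsProbabilityMeasure ρ] :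
    KLdiv ν ρ = InformationTheory.klDiv ν ρ := by
  unfold KLdiv
  split_ifs with h
  · rw [InformationTheory.klDiv_of_ac_of_integrable h.1 h.2]
    simp
  · rw [InformationTheory.klDiv_eq_top_iff.2]
    intro h1 h2; exact h ⟨h1, h2⟩

lemma KLdiv_ne_top (h : KLdiv ν ρ ≠ ⊤) : ν ≪ ρ ∧ Integrable (llr ν ρ) ν := by
  by_contra h'
  exact h (by unfold KLdiv; rw [if_neg h'])

lemma KLdiv_of (h : ν ≪ ρ ∧ Integrable (llr ν ρ) ν) :
    KLdiv ν ρ = ENNReal.ofReal (∫ a, llr ν ρ a ∂ν) := by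
  unfold KLdiv; rw [if_pos h]

lemma llr_nonneg [IsProbabilityMeasure ν] [IsProbabilityMeasure ρ]
    (h : ν ≪ ρ) (hi : Integrable (llr ν ρ) ν) : 0 ≤ ∫ a, llr ν ρ a ∂ν := by
  have := InformationTheory.integral_llr_add_sub_measure_univ_nonneg h hi
  simpa using this

lemma DV1 [IsProbabilityMeasure ν] [IsProbabilityMeasure ρ]
    (h : ν ≪ ρ) (hi : Integrable (llr ν ρ) ν) {f : α → ℝ} (hf : Integrable f ν)
    (hfe : Integrable (fun x => Real.exp (f x)) ρ) :
    ∫ x, f x ∂ν ≤ ∫ a, llr ν ρ a ∂ν + Real.log (∫ x, Real.exp (f x) ∂ρ) := by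
  have h1 := integral_llr_tilted_right h hf hfe hi
  have := isProbabilityMeasure_tilted hfe
  have h2 : ν ≪ ρ.tilted f := h.trans (absolutelyContinuous_tilted hfe)
  have h3 : Integrable (llr ν (ρ.tilted f)) ν := integrable_llr_tilted_right h hf hi hfe
  have h4 := llr_nonneg h2 h3
  linarith

lemma exp_lip {a b M : ℝ} (ha : a ≤ M) : Real.exp a - Real.exp b ≤ Real.exp M * |a - b| := by
  have h1 : Real.exp a - Real.exp b ≤ Real.exp a * |a - b| := by
    have h2 : Real.exp b = Real.exp a * Real.exp (b - a) := by rw [← Real.exp_add]; ring_nf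
    have h3 := Real.add_one_le_exp (b - a)
    have h4 := Real.exp_pos a
    have h5 : a - b ≤ |a - b| := le_abs_self _
    rw [h2]; nlinarith
  exact h1.trans (mul_le_mul_of_nonneg_right (Real.exp_le_exp.2 ha) (abs_nonneg _))

lemma bdd_integrable [IsFiniteMeasure ν] {f : α → ℝ} (hf : Measurable f) {M : ℝ}
    (hM : ∀ x, |f x| ≤ M) : Integrable f ν :=
  Integrable.of_bound hf.aestronglyMeasurable M (Eventually.of_forall hM)

lemma exp_bdd_integrable [IsFiniteMeasure ν] {f : α → ℝ} (hf : Measurable f) {M : ℝ}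
    (hM : ∀ x, |f x| ≤ M) : Integrable (fun x => Real.exp (f x)) ν :=
  bdd_integrable (M := Real.exp M) hf.exp fun x => by
    rw [abs_of_pos (Real.exp_pos _)]; exact Real.exp_le_exp.2 ((le_abs_self _).trans (hM x))
end DV

section DV2
variable {α : Type*} [MetricSpace α] [MeasurableSpace α] [BorelSpace α] {ν ρ : Measure α}

lemma clamp_dist {a b M : ℝ} (_ : 0 ≤ M) (ha : |a| ≤ M) :
    |a - max (-M) (min M b)| ≤ |a - b| := by
  rw [abs_le] at ha
  rcases max_cases (-M) (min M b) with h | h <;> rcases min_cases M b with h' | h' <;>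
    rw [h.1] <;> (try rw [h'.1]) <;> rcases abs_cases (a - b) with h3 | h3 <;>
    rw [abs_le] <;> constructor <;> linarith

lemma DV_meas [IsProbabilityMeasure ν] [IsProbabilityMeasure ρ] {c : ℝ}
    (h : ∀ f : α →ᵇ ℝ, Real.exp (∫ x, f x ∂ν - c) ≤ ∫ x, Real.exp (f x) ∂ρ)
    {f : α → ℝ} (hf : Measurable f) {M : ℝ} (hM : ∀ x, |f x| ≤ M) :
    Real.exp (∫ x, f x ∂ν - c) ≤ ∫ x, Real.exp (f x) ∂ρ := by
  obtain ⟨x0⟩ := nonempty_of_isProbabilityMeasure ν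
  have hM0 : 0 ≤ M := (abs_nonneg _).trans (hM x0)
  have key : ∀ ε : ℝ, 0 < ε → Real.exp (∫ x, f x ∂ν - ε - c) ≤
      ∫ x, Real.exp (f x) ∂ρ + Real.exp M * ε := by
    intro ε hε
    obtain ⟨g, hg, hgi⟩ := (bdd_integrable (ν := ν + ρ) hf hM).exists_boundedContinuous_integral_sub_le hε
    let gc : α →ᵇ ℝ := BoundedContinuousFunction.ofNormedAddCommGroup
      (fun x => max (-M) (min M (g x))) (by fun_prop) M (by
        intro x; rw [Real.norm_eq_abs, abs_le]
        exact ⟨le_max_left _ _, max_le (by linarith) (min_le_left _ _)⟩)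
    have hgc : ∀ x, gc x = max (-M) (min M (g x)) := fun x => rfl
    have hgcM : ∀ x, gc x ≤ M := fun x => by
      rw [hgc]; exact max_le (by linarith) (min_le_left _ _)
    have hgcM' : ∀ x, |gc x| ≤ M := fun x => by
      rw [abs_le]; exact ⟨by rw [hgc]; exact le_max_left _ _, hgcM x⟩
    have hfi : ∀ (m : Measure α) [IsFiniteMeasure m], Integrable (fun x => ‖f x - g x‖) m := fun m _ =>
      ((bdd_integrable hf hM).sub (g.integrable m)).norm
    have hcl : ∀ x, |f x - gc x| ≤ ‖f x - g x‖ := fun x => clamp_dist hM0 (hM x)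
    rw [integral_add_measure (hfi ν) (hfi ρ)] at hg
    have p1 : 0 ≤ ∫ x, ‖f x - g x‖ ∂ν := integral_nonneg fun _ => norm_nonneg _
    have p2 : 0 ≤ ∫ x, ‖f x - g x‖ ∂ρ := integral_nonneg fun _ => norm_nonneg _
    have q1 : ∫ x, f x ∂ν - ∫ x, gc x ∂ν ≤ ε := by
      rw [← integral_sub (bdd_integrable hf hM) (gc.integrable ν)]
      refine (integral_mono ((bdd_integrable hf hM).sub (gc.integrable ν)) (hfi ν)
        fun x => (le_abs_self _).trans (hcl x)).trans (by linarith)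
    have he : ∀ (m : Measure α) [IsFiniteMeasure m], Integrable (fun x => Real.exp (gc x)) m :=
      fun m _ => exp_bdd_integrable gc.continuous.measurable hgcM'
    have q2 : ∫ x, Real.exp (gc x) ∂ρ - ∫ x, Real.exp (f x) ∂ρ ≤ Real.exp M * ε := by
      rw [← integral_sub (he ρ) (exp_bdd_integrable hf hM)]
      refine (integral_mono ((he ρ).sub (exp_bdd_integrable hf hM))
        ((hfi ρ).const_mul (Real.exp M)) fun x => ?_).trans ?_
      · refine (exp_lip (hgcM x)).trans (mul_le_mul_of_nonneg_left ?_ (Real.exp_pos _).le)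
        rw [abs_sub_comm]; exact hcl x
      · rw [integral_const_mul]
        exact mul_le_mul_of_nonneg_left (by linarith) (Real.exp_pos _).le
    calc _ ≤ Real.exp (∫ x, gc x ∂ν - c) := Real.exp_le_exp.2 (by linarith)
      _ ≤ _ := h gc
      _ ≤ _ := by linarith
  have t1 : Tendsto (fun ε : ℝ => Real.exp (∫ x, f x ∂ν - ε - c)) (𝓝[>] 0)
      (𝓝 (Real.exp (∫ x, f x ∂ν - 0 - c))) :=
    (Continuous.tendsto (by fun_prop) 0).mono_left nhdsWithin_le_nhds
  have t2 : Tendsto (fun ε : ℝ => ∫ x, Real.exp (f x) ∂ρ + Real.exp M * ε) (𝓝[>] 0)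
      (𝓝 (∫ x, Real.exp (f x) ∂ρ + Real.exp M * 0)) :=
    (Continuous.tendsto (by fun_prop) 0).mono_left nhdsWithin_le_nhds
  have := le_of_tendsto_of_tendsto t1 t2 (eventually_mem_nhdsWithin.mono fun ε hε => key ε hε)
  simpa using this

lemma DV_ac [IsProbabilityMeasure ν] [IsProbabilityMeasure ρ] {c : ℝ}
    (h : ∀ f : α →ᵇ ℝ, Real.exp (∫ x, f x ∂ν - c) ≤ ∫ x, Real.exp (f x) ∂ρ) : ν ≪ ρ := by
  refine Measure.AbsolutelyContinuous.mk fun A hA h0 => ?_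
  by_contra hne
  have hpos : 0 < ν.real A := by
    rw [Measure.real, ENNReal.toReal_pos_iff]; exact ⟨pos_iff_ne_zero.2 hne, measure_lt_top _ _⟩
  have key : ∀ L : ℝ, Real.exp (L * ν.real A - c) ≤ 1 := by
    intro L
    have := DV_meas h (f := A.indicator fun _ => L) (measurable_const.indicator hA) (M := |L|)
      (fun x => by by_cases hx : x ∈ A <;> simp [hx])
    rw [integral_indicator_const _ hA] at this
    have e : ∫ x, Real.exp (A.indicator (fun _ => L) x) ∂ρ = 1 := by
      rw [integral_congr_ae (g := fun _ => (1:ℝ))]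
      · simp
      · have : ∀ᵐ x ∂ρ, x ∉ A := measure_eq_zero_iff_ae_notMem.1 h0
        filter_upwards [this] with x hx
        simp [hx]
    rw [e, smul_eq_mul] at this
    rwa [mul_comm]
  have := key ((c + 1) / ν.real A)
  rw [div_mul_cancel₀ _ hpos.ne', Real.exp_le_one_iff] at this
  linarith

lemma trunc_nonneg {h : ℝ} (h0 : 0 ≤ h) {k : ℝ} (hk : 1 ≤ k) :
    0 ≤ h * Real.log (min (max h (Real.exp (-k))) (Real.exp k)) + 1 - h := by
  have hle : Real.exp (-k) ≤ Real.exp k := Real.exp_le_exp.2 (by linarith)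
  rcases le_total h (Real.exp (-k)) with h1 | h1
  · rw [max_eq_right h1, min_eq_left hle, Real.log_exp]
    have h2 := Real.add_one_le_exp k
    have h3 : Real.exp (-k) * Real.exp k = 1 := by rw [← Real.exp_add]; simp
    have h4 : h * (k + 1) ≤ 1 := by
      calc h * (k + 1) ≤ Real.exp (-k) * Real.exp k := by gcongr
        _ = 1 := h3
    nlinarith
  · rw [max_eq_left h1]
    rcases le_total h (Real.exp k) with h2 | h2
    · rw [min_eq_left h2]; exact InformationTheory.klFun_nonneg h0
    · rw [min_eq_right h2, Real.log_exp]; nlinarith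

lemma DV2 [IsProbabilityMeasure ν] [IsProbabilityMeasure ρ] {c : ℝ}
    (h : ∀ f : α →ᵇ ℝ, Real.exp (∫ x, f x ∂ν - c) ≤ ∫ x, Real.exp (f x) ∂ρ) :
    KLdiv ν ρ ≤ ENNReal.ofReal c := by
  have hac := DV_ac h
  rw [KLdiv_eq_klDiv, InformationTheory.klDiv_eq_lintegral_klFun_of_ac hac]
  set d : α → ℝ := fun x => (ν.rnDeriv ρ x).toReal with hd
  have hdm : Measurable d := (Measure.measurable_rnDeriv ν ρ).ennreal_toReal
  have hd0 : ∀ x, 0 ≤ d x := fun x => ENNReal.toReal_nonneg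
  have hdi : Integrable d ρ := Measure.integrable_toReal_rnDeriv
  have hd1 : ∫ x, d x ∂ρ = 1 := by
    rw [hd, Measure.integral_toReal_rnDeriv hac]; simp
  let g : ℕ → α → ℝ := fun k x => min (max (d x) (Real.exp (-(k:ℝ)))) (Real.exp k)
  have hg : ∀ k, Measurable (g k) := fun k => by
    exact (hdm.max measurable_const).min measurable_const
  have hgpos : ∀ k x, 0 < g k x := fun k x =>
    lt_min (lt_max_of_lt_right (Real.exp_pos _)) (Real.exp_pos _)
  have hglb : ∀ (k : ℕ) x, Real.exp (-(k:ℝ)) ≤ g k x := fun k x =>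
    le_min (le_max_right _ _) (Real.exp_le_exp.2 (by have : (0:ℝ) ≤ k := by positivity
                                                     linarith))
  have hlogb : ∀ k x, |Real.log (g k x)| ≤ k := by
    intro k x
    rw [abs_le]
    constructor
    · rw [Real.le_log_iff_exp_le (hgpos k x)]; exact hglb k x
    · rw [Real.log_le_iff_le_exp (hgpos k x)]; exact min_le_right _ _
  have hlogm : ∀ k, Measurable fun x => Real.log (g k x) := fun k => (hg k).log
  have hlogi : ∀ k, Integrable (fun x => d x * Real.log (g k x)) ρ := fun k =>
    hdi.mul_bdd (c := k) (hlogm k).aestronglyMeasurable (Eventually.of_forall (hlogb k))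
  have hgub : ∀ (k : ℕ) x, g k x ≤ d x + Real.exp (-(k:ℝ)) := fun k x =>
    (min_le_left _ _).trans (max_le (by linarith [Real.exp_pos (-(k:ℝ))]) (by linarith [hd0 x]))
  have hbound : ∀ k : ℕ, ∫ x, d x * Real.log (g k x) ∂ρ ≤ c + Real.exp (-(k:ℝ)) := by
    intro k
    have e1 : ∫ x, d x * Real.log (g k x) ∂ρ = ∫ x, Real.log (g k x) ∂ν :=
      integral_rnDeriv_smul hac
    rw [e1]
    have h1 := DV_meas h (hlogm k) (hlogb k)
    have h2 : ∫ x, Real.exp (Real.log (g k x)) ∂ρ ≤ 1 + Real.exp (-(k:ℝ)) := by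
      calc _ ≤ ∫ x, (d x + Real.exp (-(k:ℝ))) ∂ρ := by
            refine integral_mono (exp_bdd_integrable (hlogm k) (hlogb k))
              (hdi.add (integrable_const _)) fun x => ?_
            simp only [Real.exp_log (hgpos k x)]; exact hgub k x
        _ = _ := by rw [integral_add hdi (integrable_const _), hd1]; simp
    have h3 := Real.add_one_le_exp (Real.exp (-(k:ℝ)))
    have h4 := Real.exp_le_exp.1 (h1.trans (h2.trans ((add_comm _ _).trans_le h3)))
    linarith
  have htend : ∀ x, Tendsto (fun k => ENNReal.ofReal (d x * Real.log (g k x) + 1 - d x)) atTop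
      (𝓝 (ENNReal.ofReal (InformationTheory.klFun (d x)))) := by
    intro x
    refine (ENNReal.continuous_ofReal.tendsto _).comp ?_
    refine tendsto_const_nhds.congr' ?_
    rcases (hd0 x).eq_or_lt with h0 | h0
    · simp [← h0, InformationTheory.klFun]
    · obtain ⟨N, hN⟩ := exists_nat_ge (|Real.log (d x)|)
      filter_upwards [eventually_ge_atTop N] with k hk
      have hk' : |Real.log (d x)| ≤ k := hN.trans (by exact_mod_cast hk)
      rw [abs_le] at hk'
      have e1 : Real.exp (-(k:ℝ)) ≤ d x := (Real.le_log_iff_exp_le h0).1 hk'.1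
      have e2 : d x ≤ Real.exp k := (Real.log_le_iff_le_exp h0).1 hk'.2
      simp only [g]
      rw [max_eq_left e1, min_eq_left e2]; rfl
  have hF : ∫⁻ x, ENNReal.ofReal (InformationTheory.klFun (d x)) ∂ρ ≤
      liminf (fun k => ∫⁻ x, ENNReal.ofReal (d x * Real.log (g k x) + 1 - d x) ∂ρ) atTop := by
    rw [lintegral_congr fun x => (htend x).liminf_eq.symm]
    exact lintegral_liminf_le fun k =>
      (((hdm.mul (hlogm k)).add_const 1).sub hdm).ennreal_ofReal
  refine hF.trans ?_
  have hup : ∀ᶠ k : ℕ in atTop, ∫⁻ x, ENNReal.ofReal (d x * Real.log (g k x) + 1 - d x) ∂ρ ≤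
      ENNReal.ofReal (c + Real.exp (-(k:ℝ))) := by
    filter_upwards [eventually_ge_atTop 1] with k hk
    have hi1 : Integrable (fun x => d x * Real.log (g k x) + 1) ρ := (hlogi k).add (integrable_const _)
    have hi2 : Integrable (fun x => d x * Real.log (g k x) + 1 - d x) ρ := hi1.sub hdi
    rw [← ofReal_integral_eq_lintegral_ofReal hi2
      (Eventually.of_forall fun x => trunc_nonneg (hd0 x) (by exact_mod_cast hk))]
    apply ENNReal.ofReal_le_ofReal
    rw [integral_sub hi1 hdi, integral_add (hlogi k) (integrable_const _), hd1]
    simpa using hbound k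
  have hlim : Tendsto (fun k : ℕ => ENNReal.ofReal (c + Real.exp (-(k:ℝ)))) atTop
      (𝓝 (ENNReal.ofReal (c + 0))) := by
    refine (ENNReal.continuous_ofReal.tendsto _).comp (tendsto_const_nhds.add ?_)
    exact Real.tendsto_exp_neg_atTop_nhds_zero.comp tendsto_natCast_atTop_atTop
  rw [add_zero] at hlim
  calc _ ≤ liminf (fun k : ℕ => ENNReal.ofReal (c + Real.exp (-(k:ℝ)))) atTop :=
        liminf_le_liminf hup
    _ = _ := hlim.liminf_eq
end DV2

end EdgeLDP
end

noncomputable section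
open MeasureTheory Filter Set
open scoped ENNReal NNReal Topology BoundedContinuousFunction
set_option linter.style.haveILetI false
set_option linter.unusedSectionVars false
namespace EdgeLDP

/-! ### Cells -/

/-- a partition of `[0,1]` (mod null sets) into `n` cells of mass `1/n` -/
structure Cells (n : ℕ) (C : Fin n → Set ℝ) : Prop where
  meas : ∀ i, MeasurableSet (C i)
  vol : ∀ i, unif01 (C i) = (n : ℝ≥0∞)⁻¹
  disj : Pairwise fun i j => Disjoint (C i) (C j)
  cov : ∀ᵐ u ∂unif01, u ∈ ⋃ i, C i

/-- step kernel on cells -/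
def stp {n : ℕ} (Q : Fin n → Fin n → ℝ) (C : Fin n → Set ℝ) (x y : ℝ) : ℝ :=
  ∑ i, ∑ j, Q i j * ((C i).indicator 1 x * (C j).indicator 1 y)

lemma stp_eq (n : ℕ) (Q : Fin n → Fin n → ℝ) (σ : ℝ → ℝ) :
    (fun x y => stepKernel n Q (σ x) (σ y)) =
    stp Q (fun i => σ ⁻¹' Ioc (((i : ℕ) : ℝ)/n) ((((i : ℕ) : ℝ)+1)/n)) := by
  funext x y
  unfold stepKernel stp
  refine Finset.sum_congr rfl fun i _ => Finset.sum_congr rfl fun j _ => ?_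
  classical
  simp only [indicator, mem_preimage, Pi.one_apply]
  split_ifs with h h1 h2 <;> simp_all

lemma cells_Ioc {n : ℕ} (hn : 1 ≤ n) :
    Cells n (fun i : Fin n => Ioc (((i : ℕ) : ℝ)/n) ((((i : ℕ) : ℝ)+1)/n)) := by
  have hn0 : (0:ℝ) < n := by exact_mod_cast hn
  constructor
  · intro i; exact measurableSet_Ioc
  · intro i
    have hi : ((i : ℕ) : ℝ) + 1 ≤ n := by exact_mod_cast i.2
    rw [unif01, Measure.restrict_apply measurableSet_Ioc, inter_eq_left.2, Real.volume_Ioc]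
    · rw [← sub_div, add_sub_cancel_left, one_div, ENNReal.ofReal_inv_of_pos hn0,
        ENNReal.ofReal_natCast]
    · intro u hu
      refine ⟨le_trans (by positivity) hu.1.le, hu.2.trans ?_⟩
      rwa [div_le_one hn0]
  · intro i j hij
    have key : ∀ i j : Fin n, i < j → Disjoint (Ioc (((i : ℕ) : ℝ)/n) ((((i : ℕ) : ℝ)+1)/n))
        (Ioc (((j : ℕ) : ℝ)/n) ((((j : ℕ) : ℝ)+1)/n)) := by
      intro i j h
      apply Ioc_disjoint_Ioc_of_le
      gcongr
      exact_mod_cast h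
    rcases lt_or_gt_of_ne hij with h | h
    · exact key i j h
    · exact (key j i h).symm
  · have h0 : ∀ᵐ u ∂unif01, u ≠ 0 := by
      unfold unif01
      exact ae_restrict_of_ae (by simp [ae_iff])
    have h1 : ∀ᵐ u ∂unif01, u ∈ Icc (0:ℝ) 1 := ae_restrict_mem measurableSet_Icc
    filter_upwards [h0, h1] with u hu hu1
    have hpos : 0 < u := lt_of_le_of_ne hu1.1 (Ne.symm hu)
    have hc : 0 < ⌈(n:ℝ) * u⌉₊ := Nat.ceil_pos.2 (by positivity)
    have hc' : ⌈(n:ℝ) * u⌉₊ ≤ n := Nat.ceil_le.2 (by nlinarith [hu1.2])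
    rw [mem_iUnion]
    refine ⟨⟨⌈(n:ℝ) * u⌉₊ - 1, by omega⟩, ?_⟩
    simp only [mem_Ioc]
    have e : ((⌈(n:ℝ) * u⌉₊ - 1 : ℕ) : ℝ) = (⌈(n:ℝ) * u⌉₊ : ℝ) - 1 := by
      rw [Nat.cast_sub (by omega)]; simp
    rw [e, div_lt_iff₀ hn0, le_div_iff₀ hn0]
    constructor
    · have := Nat.ceil_lt_add_one (show 0 ≤ (n:ℝ) * u by positivity)
      linarith
    · have := Nat.le_ceil ((n:ℝ) * u)
      linarith

lemma Cells.comp {n : ℕ} {C : Fin n → Set ℝ} (h : Cells n C) {σ : ℝ → ℝ}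
    (hσ : MeasurePreserving σ unif01 unif01) : Cells n (fun i => σ ⁻¹' C i) := by
  constructor
  · intro i; exact hσ.measurable (h.meas i)
  · intro i; rw [hσ.measure_preimage (h.meas i).nullMeasurableSet, h.vol]
  · intro i j hij; exact (h.disj hij).preimage σ
  · have := hσ.quasiMeasurePreserving.ae h.cov
    filter_upwards [this] with u hu
    simpa using hu

section
variable {n : ℕ} {C : Fin n → Set ℝ}

lemma stp_measurable (h : Cells n C) (Q : Fin n → Fin n → ℝ) :
    Measurable (Function.uncurry (stp Q C)) := by
  unfold stp Function.uncurry
  refine Finset.measurable_fun_sum _ fun i _ => Finset.measurable_fun_sum _ fun j _ => ?_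
  exact (((measurable_one.indicator (h.meas i)).comp measurable_fst).mul
    ((measurable_one.indicator (h.meas j)).comp measurable_snd)).const_mul _

lemma stp_integrable (h : Cells n C) (Q : Fin n → Fin n → ℝ) :
    Integrable (Function.uncurry (stp Q C)) (unif01.prod unif01) := by
  refine bdd_integrable (M := ∑ i, ∑ j, |Q i j|) (stp_measurable h Q) fun q => ?_
  unfold stp Function.uncurry
  refine (Finset.abs_sum_le_sum_abs _ _).trans (Finset.sum_le_sum fun i _ => ?_)
  refine (Finset.abs_sum_le_sum_abs _ _).trans (Finset.sum_le_sum fun j _ => ?_)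
  rw [abs_mul]
  refine mul_le_of_le_one_right (abs_nonneg _) ?_
  by_cases h1 : q.1 ∈ C i <;> by_cases h2 : q.2 ∈ C j <;> simp [h1, h2]

variable {X : Type*} [MeasurableSpace X]

/-- measure obtained from cell laws -/
def Nm (C : Fin n → Set ℝ) (m : Fin n → Measure X) : Measure (ℝ × X) :=
  ∑ i, (unif01.restrict (C i)).prod (m i)

/-- second marginal of the restriction to a cell -/
def cm (ν : Measure (ℝ × X)) (S : Set ℝ) : Measure X := (ν.restrict (S ×ˢ univ)).map Prod.snd

instance (ν : Measure (ℝ × X)) [IsFiniteMeasure ν] (S : Set ℝ) : IsFiniteMeasure (cm ν S) := by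
  unfold cm; infer_instance

lemma cm_apply (ν : Measure (ℝ × X)) {S : Set ℝ} (hS : MeasurableSet S) {A : Set X}
    (hA : MeasurableSet A) : cm ν S A = ν (S ×ˢ A) := by
  rw [cm, Measure.map_apply measurable_snd hA, Measure.restrict_apply (measurable_snd hA)]
  congr 1
  ext z; simp [and_comm]

lemma Cells.sum_restrict (h : Cells n C) : ∑ i, unif01.restrict (C i) = unif01 := by
  rw [← Measure.sum_fintype, ← Measure.restrict_iUnion h.disj h.meas]
  exact Measure.restrict_eq_self_of_ae_mem h.cov

lemma Nm_inTM (h : Cells n C) {m : Fin n → Measure X}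
    (hm : ∀ i, IsProbabilityMeasure (m i)) : inTM (Nm C m) := by
  have h1 : (Nm C m).map Prod.fst = unif01 := by
    unfold Nm
    rw [← Measure.sum_fintype, Measure.map_sum measurable_fst.aemeasurable, Measure.sum_fintype]
    simp only [Measure.map_fst_prod, measure_univ, one_smul]
    exact h.sum_restrict
  refine ⟨⟨?_⟩, h1⟩
  have : (Nm C m).map Prod.fst univ = 1 := by rw [h1]; simp
  rwa [Measure.map_apply measurable_fst MeasurableSet.univ, preimage_univ] at this

lemma cm_Nm (h : Cells n C) {m : Fin n → Measure X}
    (hm : ∀ i, IsProbabilityMeasure (m i)) (i : Fin n) :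
    cm (Nm C m) (C i) = (n : ℝ≥0∞)⁻¹ • m i := by
  ext A hA
  rw [cm_apply _ (h.meas i) hA, Nm, Measure.finsetSum_apply]
  simp only [Measure.prod_prod, Measure.smul_apply, smul_eq_mul]
  rw [Finset.sum_eq_single i]
  · rw [Measure.restrict_apply_self, h.vol]
  · intro j _ hj
    rw [Measure.restrict_apply (h.meas i), (h.disj hj.symm).inter_eq]; simp
  · simp

lemma TT_step (h : Cells n C) (Q : Fin n → Fin n → ℝ) {ν : Measure (ℝ × X)}
    [IsProbabilityMeasure ν] {ψ : X → X → ℝ} (hψ : Measurable (Function.uncurry ψ)) {K : ℝ}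
    (hK : ∀ y y', |ψ y y'| ≤ K) :
    TT (stp Q C) ψ ν =
      ∑ i, ∑ j, Q i j * ∫ q, ψ q.1 q.2 ∂((cm ν (C i)).prod (cm ν (C j))) := by
  have hψ2 : Measurable (fun p : (ℝ × X) × (ℝ × X) => ψ p.1.2 p.2.2) :=
    hψ.comp ((measurable_snd.comp measurable_fst).prodMk (measurable_snd.comp measurable_snd))
  have hS : ∀ i j, MeasurableSet ((C i ×ˢ (univ : Set X)) ×ˢ (C j ×ˢ (univ : Set X))) := fun i j =>
    ((h.meas i).prod MeasurableSet.univ).prod ((h.meas j).prod MeasurableSet.univ)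
  have e : ∀ p : (ℝ × X) × (ℝ × X), ψ p.1.2 p.2.2 * stp Q C p.1.1 p.2.1 =
      ∑ i, ∑ j, Q i j * ((C i ×ˢ (univ : Set X)) ×ˢ (C j ×ˢ (univ : Set X))).indicator
        (fun p => ψ p.1.2 p.2.2) p := by
    intro p
    unfold stp
    rw [Finset.mul_sum]
    refine Finset.sum_congr rfl fun i _ => ?_
    rw [Finset.mul_sum]
    refine Finset.sum_congr rfl fun j _ => ?_
    by_cases h1 : p.1.1 ∈ C i <;> by_cases h2 : p.2.1 ∈ C j <;> simp [indicator, h1, h2, mul_comm]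
  have hi : ∀ i j, Integrable (fun p => Q i j *
      ((C i ×ˢ (univ : Set X)) ×ˢ (C j ×ˢ (univ : Set X))).indicator
        (fun p : (ℝ × X) × (ℝ × X) => ψ p.1.2 p.2.2) p) (ν.prod ν) := fun i j =>
    ((bdd_integrable hψ2 fun p => hK _ _).indicator (hS i j)).const_mul _
  unfold TT
  simp only [e]
  rw [integral_finsetSum _ fun i _ => integrable_finsetSum _ fun j _ => hi i j]
  refine Finset.sum_congr rfl fun i _ => ?_
  rw [integral_finsetSum _ fun j _ => hi i j]
  refine Finset.sum_congr rfl fun j _ => ?_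
  rw [integral_const_mul, integral_indicator (hS i j), ← Measure.prod_restrict]
  unfold cm
  rw [Measure.map_prod_map _ _ measurable_snd measurable_snd, integral_map]
  · rfl
  · exact (measurable_snd.prodMap measurable_snd).aemeasurable
  · exact hψ.aestronglyMeasurable

lemma cm_prob (h : Cells n C) (hn : 1 ≤ n) {ν : Measure (ℝ × X)} (hν : inTM ν) (i : Fin n) :
    IsProbabilityMeasure ((n : ℝ≥0∞) • cm ν (C i)) := by
  refine ⟨?_⟩
  rw [Measure.smul_apply, cm_apply _ (h.meas i) MeasurableSet.univ]
  have : ν (C i ×ˢ univ) = (n : ℝ≥0∞)⁻¹ := by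
    rw [← h.vol i, ← hν.2, Measure.map_apply measurable_fst (h.meas i)]
    congr 1; ext z; simp
  rw [this, smul_eq_mul, ENNReal.mul_inv_cancel (by simp; omega) (by simp)]

lemma TT_bar (h : Cells n C) (hn : 1 ≤ n) (Q : Fin n → Fin n → ℝ) {ν : Measure (ℝ × X)}
    (hν : inTM ν) {ψ : X → X → ℝ} (hψ : Measurable (Function.uncurry ψ)) {K : ℝ}
    (hK : ∀ y y', |ψ y y'| ≤ K) :
    TT (stp Q C) ψ (Nm C fun i => (n : ℝ≥0∞) • cm ν (C i)) = TT (stp Q C) ψ ν := by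
  have := hν.1
  have hp := cm_prob h hn hν
  have := (Nm_inTM h hp).1
  rw [TT_step h Q hψ hK, TT_step h Q hψ hK]
  have e : ∀ i, cm (Nm C fun i => (n : ℝ≥0∞) • cm ν (C i)) (C i) = cm ν (C i) := by
    intro i
    rw [cm_Nm h hp, smul_smul, ENNReal.inv_mul_cancel (by simp; omega) (by simp), one_smul]
  simp only [e]

lemma TT_dirac (h : Cells n C) (Q : Fin n → Fin n → ℝ) (x : Fin n → X)
    {ψ : X → X → ℝ} (hψ : Measurable (Function.uncurry ψ)) {K : ℝ}
    (hK : ∀ y y', |ψ y y'| ≤ K) :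
    TT (stp Q C) ψ (Nm C fun i => Measure.dirac (x i)) =
      ∑ i, ∑ j, ψ (x i) (x j) * Q i j / (n : ℝ) ^ 2 := by
  have hp : ∀ i, IsProbabilityMeasure (Measure.dirac (x i)) := fun i => inferInstance
  have := (Nm_inTM h hp).1
  rw [TT_step h Q hψ hK]
  refine Finset.sum_congr rfl fun i _ => Finset.sum_congr rfl fun j _ => ?_
  rw [cm_Nm h hp, cm_Nm h hp, Measure.prod_smul_left, Measure.prod_smul_right,
    integral_smul_measure, integral_smul_measure, Measure.dirac_prod_dirac]
  have ed : ∫ q : X × X, ψ q.1 q.2 ∂(Measure.dirac (x i, x j)) = ψ (x i) (x j) :=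
    integral_dirac' _ _ hψ.stronglyMeasurable
  rw [ed]
  simp only [ENNReal.toReal_inv, ENNReal.toReal_natCast, smul_eq_mul]
  field_simp
end

end EdgeLDP
end

noncomputable section
open MeasureTheory Filter Set
open scoped ENNReal NNReal Topology BoundedContinuousFunction
set_option linter.style.haveILetI false
set_option linter.unusedSectionVars false
namespace EdgeLDP

/-! ### Choosing good cells -/

lemma kerNorm_toReal {W : ℝ → ℝ → ℝ} (hW : Integrable (Function.uncurry W) (unif01.prod unif01)) :
    ∫ q, |Function.uncurry W q| ∂(unif01.prod unif01) = (kerNorm W 1).toReal := by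
  unfold kerNorm
  rw [eLpNorm_one_eq_lintegral_enorm]
  exact integral_norm_eq_lintegral_enorm hW.1

lemma integrable_of_kerNorm {W : ℝ → ℝ → ℝ} (hWm : Measurable (Function.uncurry W))
    (hW : kerNorm W 1 ≠ ⊤) : Integrable (Function.uncurry W) (unif01.prod unif01) := by
  rw [← memLp_one_iff_integrable]
  exact ⟨hWm.aestronglyMeasurable, hW.lt_top⟩

lemma kerNorm_comp {V : ℝ → ℝ → ℝ} (hV : Measurable (Function.uncurry V)) {σ : ℝ → ℝ}
    (hσ : MeasurePreserving σ unif01 unif01) :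
    kerNorm (fun x y => V (σ x) (σ y)) 1 = kerNorm V 1 := by
  have h := eLpNorm_comp_measurePreserving (p := 1) (g := Function.uncurry V)
    hV.aestronglyMeasurable (hσ.prod hσ)
  exact h

lemma cut_integral_eq (U : ℝ → ℝ → ℝ) {S T : Set ℝ} (hS : MeasurableSet S) (hT : MeasurableSet T) :
    ∫ x in Set.Icc (0:ℝ) 1 ∩ S, ∫ y in Set.Icc (0:ℝ) 1 ∩ T, U x y =
      ∫ x in S, ∫ y in T, U x y ∂unif01 ∂unif01 := by
  unfold unif01
  rw [Measure.restrict_restrict hS, Measure.restrict_restrict hT, inter_comm S, inter_comm T]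

lemma cut_abs_le {U : ℝ → ℝ → ℝ} (hU : Integrable (Function.uncurry U) (unif01.prod unif01))
    (S T : Set ℝ) :
    |∫ x in S, ∫ y in T, U x y ∂unif01 ∂unif01| ≤
      ∫ q, |Function.uncurry U q| ∂(unif01.prod unif01) := by
  have h1 : ∫ x in S, ∫ y in T, U x y ∂unif01 ∂unif01 =
      ∫ q in S ×ˢ T, Function.uncurry U q ∂(unif01.prod unif01) := by
    rw [setIntegral_prod _ hU.integrableOn]; rfl
  rw [h1]
  refine (abs_integral_le_integral_abs).trans ?_
  exact setIntegral_le_integral hU.abs (Eventually.of_forall fun _ => abs_nonneg _)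

lemma cut_le_cutDist {W₁ W₂ : ℝ → ℝ → ℝ}
    (h1 : Integrable (Function.uncurry W₁) (unif01.prod unif01))
    (h2 : Integrable (Function.uncurry W₂) (unif01.prod unif01)) {S T : Set ℝ}
    (hS : MeasurableSet S) (hT : MeasurableSet T) :
    |∫ x in S, ∫ y in T, (W₁ x y - W₂ x y) ∂unif01 ∂unif01| ≤ cutDist W₁ W₂ := by
  have hU : Integrable (Function.uncurry fun x y => W₁ x y - W₂ x y) (unif01.prod unif01) :=
    h1.sub h2
  set B := ∫ q, |Function.uncurry (fun x y => W₁ x y - W₂ x y) q| ∂(unif01.prod unif01)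
  have hB : ∀ (S T : {S : Set ℝ // MeasurableSet S}),
      |∫ x in Set.Icc (0:ℝ) 1 ∩ S.1, ∫ y in Set.Icc (0:ℝ) 1 ∩ T.1, (W₁ x y - W₂ x y)| ≤ B := by
    intro S T
    rw [cut_integral_eq _ S.2 T.2]; exact cut_abs_le hU _ _
  have : Nonempty {S : Set ℝ // MeasurableSet S} := ⟨⟨∅, MeasurableSet.empty⟩⟩
  have b1 : ∀ S : {S : Set ℝ // MeasurableSet S}, BddAbove (range fun T : {S : Set ℝ // MeasurableSet S} =>
      |∫ x in Set.Icc (0:ℝ) 1 ∩ S.1, ∫ y in Set.Icc (0:ℝ) 1 ∩ T.1, (W₁ x y - W₂ x y)|) := by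
    intro S; refine ⟨B, ?_⟩; rintro _ ⟨T, rfl⟩; exact hB S T
  rw [← cut_integral_eq _ hS hT]
  unfold cutDist
  refine (le_ciSup (b1 ⟨S, hS⟩) ⟨T, hT⟩).trans ?_
  refine le_ciSup (f := fun S : {S : Set ℝ // MeasurableSet S} => ⨆ T : {T : Set ℝ // MeasurableSet T},
    |∫ x in Set.Icc (0:ℝ) 1 ∩ S.1, ∫ y in Set.Icc (0:ℝ) 1 ∩ T.1, (W₁ x y - W₂ x y)|) ?_ ⟨S, hS⟩
  refine ⟨B, ?_⟩
  rintro _ ⟨S, rfl⟩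
  exact ciSup_le fun T => hB S T

variable {X : Type*} [MetricSpace X] [CompactSpace X] [MeasurableSpace X] [BorelSpace X]

set_option maxHeartbeats 1000000 in
lemma exists_cells [Nonempty X] (Q : ∀ n : ℕ, Fin n → Fin n → ℝ)
    (W : ℝ → ℝ → ℝ) (hWmeas : Measurable (Function.uncurry W))
    (hcut : Tendsto (fun n => weakCutDist (stepKernel n (Q n)) W) atTop (nhds 0))
    (hnorm : Filter.atTop.limsup (fun n => kerNorm (stepKernel n (Q n)) 1) ≠ ⊤)
    (hWL1 : kerNorm W 1 ≠ ⊤) {ψ : X → X → ℝ} (hψ : Continuous (Function.uncurry ψ)) :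
    ∃ C : ∀ n : ℕ, Fin n → Set ℝ, (∀ n, 1 ≤ n → Cells n (C n)) ∧
      ∀ ε : ℝ, 0 < ε → ∀ᶠ n in atTop, ∀ ν : Measure (ℝ × X), inTM ν →
        |TT (stp (Q n) (C n)) ψ ν - TT W ψ ν| ≤ ε := by
  have hW := integrable_of_kerNorm hWmeas hWL1
  have hex : ∀ n, ∃ σ, MPB σ ∧ cutDist (fun x y => stepKernel n (Q n) (σ x) (σ y)) W <
      weakCutDist (stepKernel n (Q n)) W + 1 / ((n:ℝ) + 1) := by
    intro n
    have : Nonempty {σ : ℝ → ℝ // MPB σ} := ⟨⟨id, bijOn_id _, MeasurePreserving.id _⟩⟩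
    obtain ⟨σ, hσ⟩ := exists_lt_of_ciInf_lt
      (show weakCutDist (stepKernel n (Q n)) W <
        weakCutDist (stepKernel n (Q n)) W + 1 / ((n:ℝ) + 1) from lt_add_of_pos_right _ (by positivity))
    exact ⟨σ.1, σ.2, hσ⟩
  choose σ hσ hσc using hex
  let C : ∀ n : ℕ, Fin n → Set ℝ := fun n i =>
    σ n ⁻¹' Ioc (((i : ℕ) : ℝ)/n) ((((i : ℕ) : ℝ)+1)/n)
  have hC : ∀ n, 1 ≤ n → Cells n (C n) := fun n hn => (cells_Ioc hn).comp (hσ n).2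
  refine ⟨C, hC, fun ε hε => ?_⟩
  obtain ⟨b, hb⟩ : ∃ b : ℝ≥0, ∀ᶠ n in atTop, kerNorm (stepKernel n (Q n)) 1 ≤ b := by
    obtain ⟨b, hb, -⟩ := ENNReal.lt_iff_exists_nnreal_btwn.1 hnorm.lt_top
    exact ⟨b, (eventually_lt_of_limsup_lt hb).mono fun n hn => hn.le⟩
  set A : ℝ := b + ∫ q, |Function.uncurry W q| ∂(unif01.prod unif01) with hA
  have hA0 : 0 ≤ A := add_nonneg b.2 (integral_nonneg fun _ => abs_nonneg _)
  obtain ⟨K, hK0, hK⟩ := cut_TT hψ (show 0 < ε / (2 * (A + 1)) by positivity)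
  obtain ⟨Cψ, hCψ0, hCψ⟩ := exists_bound_psi hψ
  have hκ : Tendsto (fun n : ℕ => K * (weakCutDist (stepKernel n (Q n)) W + 1 / ((n:ℝ) + 1))) atTop
      (𝓝 (K * (0 + 0))) :=
    (hcut.add tendsto_one_div_add_atTop_nhds_zero_nat).const_mul K
  simp only [add_zero, mul_zero] at hκ
  filter_upwards [hb, eventually_ge_atTop 1, hκ.eventually (eventually_le_nhds (half_pos hε))]
    with n hn hn1 hnκ ν hν
  have hUi := stp_integrable (hC n hn1) (Q n)
  have hUm := stp_measurable (hC n hn1) (Q n)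
  rw [TT_sub_U hν hUi hW hψ.measurable hCψ]
  have hstp : stp (Q n) (C n) = fun x y => stepKernel n (Q n) (σ n x) (σ n y) :=
    (stp_eq n (Q n) (σ n)).symm
  have hnormU : ∫ q, |Function.uncurry (stp (Q n) (C n)) q| ∂(unif01.prod unif01) ≤ b := by
    rw [kerNorm_toReal hUi]
    have : kerNorm (stp (Q n) (C n)) 1 = kerNorm (stepKernel n (Q n)) 1 := by
      rw [hstp]
      have hm := stp_measurable (cells_Ioc hn1) (Q n)
      have he := stp_eq n (Q n) id
      simp only [preimage_id, id] at he
      rw [← he] at hm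
      exact kerNorm_comp hm (hσ n).2
    rw [this]
    exact ENNReal.toReal_le_coe_of_le_coe hn
  have hdi : Integrable (Function.uncurry fun x y => stp (Q n) (C n) x y - W x y)
    (unif01.prod unif01) := hUi.sub hW
  have h1 := hK ν hν (fun x y => stp (Q n) (C n) x y - W x y) (hUm.sub hWmeas) hdi
    (weakCutDist (stepKernel n (Q n)) W + 1 / ((n:ℝ) + 1)) (fun S T hS hT => by
      refine (cut_le_cutDist hUi hW hS hT).trans ?_
      rw [hstp]; exact (hσc n).le)
  refine h1.trans ?_
  have h2 : ∫ q, |Function.uncurry (fun x y => stp (Q n) (C n) x y - W x y) q|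
      ∂(unif01.prod unif01) ≤ A := by
    calc _ ≤ ∫ q, (|Function.uncurry (stp (Q n) (C n)) q| + |Function.uncurry W q|)
          ∂(unif01.prod unif01) :=
          integral_mono hdi.abs (hUi.abs.add hW.abs) fun q => abs_sub _ _
      _ ≤ A := by rw [integral_add hUi.abs hW.abs]; linarith
  have h3 : ε / (2 * (A + 1)) * A ≤ ε / 2 := by
    calc ε / (2 * (A + 1)) * A ≤ ε / (2 * (A + 1)) * (A + 1) := by gcongr; linarith
      _ = ε / 2 := by field_simp
  have h4 : ε / (2 * (A + 1)) * ∫ q, |Function.uncurry (fun x y => stp (Q n) (C n) x y - W x y) q|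
      ∂(unif01.prod unif01) ≤ ε / (2 * (A + 1)) * A := by gcongr
  linarith

end EdgeLDP
end

noncomputable section
open MeasureTheory Filter Set
open scoped ENNReal NNReal Topology BoundedContinuousFunction
set_option linter.style.haveILetI false
set_option linter.unusedSectionVars false
namespace EdgeLDP

section
variable {X : Type*} [MetricSpace X] [CompactSpace X] [MeasurableSpace X] [BorelSpace X]

/-! ### Goodness -/

/-- Donsker-Varadhan sublevel sets -/
def Lset (ρ : Measure (ℝ × X)) (c : ℝ) : Set (ProbabilityMeasure (ℝ × X)) :=
  TMset X ∩ ⋂ f : ℝ × X →ᵇ ℝ, {ν | Real.exp (∫ x, f x ∂(ν : Measure (ℝ × X)) - c) ≤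
    ∫ x, Real.exp (f x) ∂ρ}

lemma isCompact_Lset (ρ : Measure (ℝ × X)) (c : ℝ) : IsCompact (Lset ρ c) := by
  refine isCompact_TMset.inter_right (isClosed_iInter fun f => ?_)
  have := ProbabilityMeasure.continuous_integral_boundedContinuousFunction f
  exact isClosed_le (by fun_prop) continuous_const

lemma exp_bcf_integrable (f : ℝ × X →ᵇ ℝ) (ρ : Measure (ℝ × X)) [IsFiniteMeasure ρ] :
    Integrable (fun x => Real.exp (f x)) ρ :=
  exp_bdd_integrable f.continuous.measurable (M := ‖f‖) fun x => f.norm_coe_le_norm x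

lemma mem_Lset {ρ : Measure (ℝ × X)} [IsProbabilityMeasure ρ] {c : ℝ} (hc : 0 ≤ c)
    {ν : Measure (ℝ × X)} (hν : inTM ν) (h : KLdiv ν ρ ≤ ENNReal.ofReal c) :
    (⟨ν, hν.1⟩ : ProbabilityMeasure (ℝ × X)) ∈ Lset ρ c := by
  refine ⟨hν, mem_iInter.2 fun f => ?_⟩
  have := hν.1
  have h1 := KLdiv_ne_top (ne_top_of_le_ne_top ENNReal.ofReal_ne_top h)
  rw [KLdiv_of h1, ENNReal.ofReal_le_ofReal_iff hc] at h
  have h2 := DV1 h1.1 h1.2 (f.integrable ν) (exp_bcf_integrable f ρ)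
  have hpos : 0 < ∫ x, Real.exp (f x) ∂ρ := integral_exp_pos (exp_bcf_integrable f ρ)
  change Real.exp (∫ x, f x ∂ν - c) ≤ ∫ x, Real.exp (f x) ∂ρ
  rw [← Real.exp_log hpos]
  exact Real.exp_le_exp.2 (by linarith)

lemma KLdiv_of_mem_Lset {ρ : Measure (ℝ × X)} [IsProbabilityMeasure ρ] {c : ℝ}
    {ν : ProbabilityMeasure (ℝ × X)} (h : ν ∈ Lset ρ c) :
    KLdiv (ν : Measure (ℝ × X)) ρ ≤ ENNReal.ofReal c :=
  DV2 fun f => mem_iInter.1 h.2 f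

/-- the functional on probability measures -/
def Tf (W : ℝ → ℝ → ℝ) (φ : (Fin 2 → X) → ℝ) (ν : ProbabilityMeasure (ℝ × X)) : ℝ :=
  TT W (fun y y' => φ ![y, y']) (ν : Measure (ℝ × X))

variable (μ : Measure X) [IsProbabilityMeasure μ] {W : ℝ → ℝ → ℝ}
  {φ : (Fin 2 → X) → ℝ} (G : SimpleGraph (Fin 2)) [DecidableRel G.Adj]

lemma rate0_le_iff (hK2 : ∀ a b : Fin 2, G.Adj a b ↔ a ≠ b) (t : ℝ) (c : ℝ) (hc : 0 ≤ c) :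
    rate0 G W φ μ t ≤ ENNReal.ofReal c ↔ ∀ ε : {ε : ℝ // 0 < ε},
      t ∈ Tf W φ '' Lset (unif01.prod μ) (c + ε.1) := by
  constructor
  · intro h ε
    have h1 : rate0 G W φ μ t < ENNReal.ofReal (c + ε.1) :=
      h.trans_lt (by rw [ENNReal.ofReal_lt_ofReal_iff (by linarith [ε.2])]; linarith [ε.2])
    unfold rate0 at h1
    obtain ⟨ν, hν⟩ := iInf_lt_iff.1 h1
    refine ⟨⟨ν.1, ν.2.1.1⟩, mem_Lset (by linarith [ε.2]) ν.2.1 hν.le, ?_⟩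
    have := ν.2.2.2
    rw [TWphi_eq G hK2 W φ _ ν.2.1.1] at this
    exact this
  · intro h
    refine ENNReal.le_of_forall_pos_le_add fun ε hε _ => ?_
    obtain ⟨ν, hν, hT⟩ := h ⟨ε, NNReal.coe_pos.2 hε⟩
    have hK := KLdiv_of_mem_Lset hν
    have hν1 : inTM (ν : Measure (ℝ × X)) := hν.1
    refine (iInf_le (fun ν : {ν : Measure (ℝ × X) //
      inTM ν ∧ KLdiv ν (unif01.prod μ) ≠ ⊤ ∧ TWphi G W φ ν = t} => KLdiv ν.1 (unif01.prod μ))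
      ⟨ν, hν1, ne_top_of_le_ne_top ENNReal.ofReal_ne_top hK, ?_⟩).trans ?_
    · rw [TWphi_eq G hK2 W φ _ hν1.1]; exact hT
    · refine hK.trans ?_
      change ENNReal.ofReal (c + (ε : ℝ)) ≤ _
      rw [ENNReal.ofReal_add hc ε.coe_nonneg]
      simp

lemma continuousOn_Tf (hW : Integrable (Function.uncurry W) (unif01.prod unif01))
    (hψ : Continuous (Function.uncurry fun y y' => φ ![y, y'])) :
    ContinuousOn (Tf W φ) (TMset X) := continuousOn_TT hW hψ

lemma rate0_good (hK2 : ∀ a b : Fin 2, G.Adj a b ↔ a ≠ b)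
    (hW : Integrable (Function.uncurry W) (unif01.prod unif01))
    (hψ : Continuous (Function.uncurry fun y y' => φ ![y, y'])) (c : ℝ≥0∞) (hc : c ≠ ⊤) :
    IsCompact {t | rate0 G W φ μ t ≤ c} := by
  have e : {t | rate0 G W φ μ t ≤ c} = ⋂ ε : {ε : ℝ // 0 < ε},
      Tf W φ '' Lset (unif01.prod μ) (c.toReal + ε.1) := by
    ext t
    rw [mem_iInter, ← rate0_le_iff μ G hK2 t c.toReal ENNReal.toReal_nonneg,
      ENNReal.ofReal_toReal hc, mem_ofPred_eq]
  have hcomp : ∀ d : ℝ, IsCompact (Tf W φ '' Lset (unif01.prod μ) d) := fun d =>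
    (isCompact_Lset _ d).image_of_continuousOn
      ((continuousOn_Tf hW hψ).mono inter_subset_left)
  have hcl : IsClosed (⋂ ε : {ε : ℝ // 0 < ε},
      Tf W φ '' Lset (unif01.prod μ) (c.toReal + ε.1)) :=
    isClosed_iInter fun ε => (hcomp (c.toReal + ε.1)).isClosed
  have hsub : (⋂ ε : {ε : ℝ // 0 < ε},
      Tf W φ '' Lset (unif01.prod μ) (c.toReal + ε.1)) ⊆
      Tf W φ '' Lset (unif01.prod μ) (c.toReal + 1) := by
    intro t ht
    exact mem_iInter.1 ht ⟨(1:ℝ), one_pos⟩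
  rw [e]
  exact (hcomp (c.toReal + 1)).of_isClosed_subset hcl hsub

/-! ### Chernoff bound -/

variable {n : ℕ} {C : Fin n → Set ℝ}

lemma integral_Nm (C : Fin n → Set ℝ) (m : Fin n → Measure X)
    [hm : ∀ i, IsProbabilityMeasure (m i)] {f : ℝ × X → ℝ} (hf : Measurable f) {M : ℝ}
    (hM : ∀ z, |f z| ≤ M) :
    ∫ z, f z ∂(Nm C m) = ∑ i, ∫ y, (∫ u in C i, f (u, y) ∂unif01) ∂(m i) := by
  unfold Nm
  rw [integral_finsetSum_measure fun i _ => bdd_integrable hf hM]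
  refine Finset.sum_congr rfl fun i _ => ?_
  exact integral_prod_symm _ (bdd_integrable hf hM)

lemma cellint_measurable (S : Set ℝ) {f : ℝ × X → ℝ} (hf : Measurable f) :
    Measurable fun y => ∫ u in S, f (u, y) ∂unif01 :=
  (hf.stronglyMeasurable.integral_prod_left' (μ := unif01.restrict S)).measurable

lemma cellint_abs (h : Cells n C) (i : Fin n) {f : ℝ × X → ℝ} {M : ℝ}
    (hM : ∀ z, |f z| ≤ M) (y : X) : |∫ u in C i, f (u, y) ∂unif01| ≤ M * (n:ℝ)⁻¹ := by
  have := norm_integral_le_of_norm_le_const (μ := unif01.restrict (C i)) (C := M)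
    (f := fun u => f (u, y)) (Eventually.of_forall fun u => hM (u, y))
  have e : (unif01.restrict (C i)).real univ = (n:ℝ)⁻¹ := by
    rw [Measure.real, Measure.restrict_apply_univ, h.vol]; simp
  rwa [e] at this

lemma integral_nu (C : Fin n → Set ℝ) (x : Fin n → X) {f : ℝ × X → ℝ} (hf : Measurable f) {M : ℝ}
    (hM : ∀ z, |f z| ≤ M) :
    ∫ z, f z ∂(Nm C fun i => Measure.dirac (x i)) = ∑ i, ∫ u in C i, f (u, x i) ∂unif01 := by
  rw [integral_Nm C _ hf hM]
  refine Finset.sum_congr rfl fun i _ => ?_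
  exact integral_dirac' _ _ (cellint_measurable (C i) hf).stronglyMeasurable

lemma cell_prob (h : Cells n C) (hn : 1 ≤ n) (i : Fin n) :
    IsProbabilityMeasure ((n : ℝ≥0∞) • unif01.restrict (C i)) := by
  refine ⟨?_⟩
  rw [Measure.smul_apply, Measure.restrict_apply_univ, h.vol, smul_eq_mul,
    ENNReal.mul_inv_cancel (by simp; omega) (by simp)]

lemma cell_jensen (h : Cells n C) (hn : 1 ≤ n) (i : Fin n) {f : ℝ × X → ℝ} (hf : Measurable f)
    {M : ℝ} (hM : ∀ z, |f z| ≤ M) (y : X) :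
    Real.exp (n * ∫ u in C i, f (u, y) ∂unif01) ≤
      n * ∫ u in C i, Real.exp (f (u, y)) ∂unif01 := by
  have := cell_prob h hn i
  have hfy : Measurable fun u => f (u, y) := hf.comp measurable_prodMk_right
  have hj := convexOn_exp.map_integral_le (μ := (n : ℝ≥0∞) • unif01.restrict (C i))
    (f := fun u => f (u, y)) Real.continuous_exp.continuousOn isClosed_univ
    (Eventually.of_forall fun _ => mem_univ _) (bdd_integrable hfy fun u => hM _)
    (exp_bdd_integrable hfy fun u => hM _)
  rw [integral_smul_measure, integral_smul_measure] at hj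
  simpa using hj

lemma chernoff_int (h : Cells n C) (hn : 1 ≤ n) {f : ℝ × X → ℝ} (hf : Measurable f)
    {M : ℝ} (hM : ∀ z, |f z| ≤ M) :
    ∫ x : Fin n → X, ∏ i, Real.exp (n * ∫ u in C i, f (u, x i) ∂unif01)
      ∂(Measure.pi fun _ => μ) ≤ (∫ z, Real.exp (f z) ∂(unif01.prod μ)) ^ n := by
  rw [integral_fintype_prod_eq_prod (fun i y => Real.exp (n * ∫ u in C i, f (u, y) ∂unif01))]
  set Λ := ∫ z, Real.exp (f z) ∂(unif01.prod μ)
  have hΛ : 0 < Λ := integral_exp_pos (exp_bdd_integrable hf hM)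
  have hn0 : (0:ℝ) < n := by exact_mod_cast hn
  let b : Fin n → ℝ := fun i => ∫ y, n * ∫ u in C i, Real.exp (f (u, y)) ∂unif01 ∂μ
  have hexpM : ∀ z, |Real.exp (f z)| ≤ Real.exp M := fun z => by
    rw [abs_of_pos (Real.exp_pos _)]; exact Real.exp_le_exp.2 ((le_abs_self _).trans (hM z))
  have hab : ∀ i, ∫ y, Real.exp (n * ∫ u in C i, f (u, y) ∂unif01) ∂μ ≤ b i := by
    intro i
    refine integral_mono ?_ ?_ fun y => cell_jensen h hn i hf hM y
    · refine exp_bdd_integrable (M := M) ((cellint_measurable (C i) hf).const_mul _) fun y => ?_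
      rw [abs_mul, abs_of_pos hn0]
      calc (n:ℝ) * _ ≤ n * (M * (n:ℝ)⁻¹) := by gcongr; exact cellint_abs h i hM y
        _ = M := by field_simp
    · exact (bdd_integrable (cellint_measurable (C i) hf.exp) fun y =>
        cellint_abs h i hexpM y).const_mul _
  have hsum : ∑ i, b i = n * Λ := by
    simp only [b, integral_const_mul]
    rw [← Finset.mul_sum, ← integral_Nm C (fun _ => μ) hf.exp hexpM]
    congr 2
    unfold Nm
    have : ∑ i, (unif01.restrict (C i)).prod μ = (∑ i, unif01.restrict (C i)).prod μ := by
      rw [← Measure.sum_fintype, ← Measure.sum_fintype, Measure.prod_sum_left]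
    rw [this, h.sum_restrict]
  have hprod : ∏ i, (b i / Λ) ≤ 1 := by
    calc ∏ i, (b i / Λ) ≤ ∏ i, Real.exp (b i / Λ - 1) := by
          refine Finset.prod_le_prod (fun i _ => ?_) fun i _ => ?_
          · exact div_nonneg ((integral_nonneg fun y => (Real.exp_pos _).le).trans (hab i)) hΛ.le
          · have := Real.add_one_le_exp (b i / Λ - 1); linarith
      _ = 1 := by
          rw [← Real.exp_sum, Finset.sum_sub_distrib, ← Finset.sum_div, hsum]
          simp [hΛ.ne']
  rw [Finset.prod_div_distrib, Finset.prod_const, Finset.card_univ, Fintype.card_fin,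
    div_le_one (by positivity)] at hprod
  exact (Finset.prod_le_prod (fun i _ => integral_nonneg fun y => (Real.exp_pos _).le)
    fun i _ => hab i).trans hprod

lemma chernoff (h : Cells n C) (hn : 1 ≤ n) (f : ℝ × X →ᵇ ℝ) (α : ℝ) :
    (Measure.pi fun _ : Fin n => μ) {x | ∫ z, Real.exp (f z) ∂(unif01.prod μ) <
      Real.exp (∫ z, f z ∂(Nm C fun i => Measure.dirac (x i)) - α)} ≤
      ENNReal.ofReal (Real.exp (-(n * α))) := by
  set Λ := ∫ z, Real.exp (f z) ∂(unif01.prod μ)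
  have hΛ : 0 < Λ := integral_exp_pos (exp_bcf_integrable f _)
  have hn0 : (0:ℝ) < n := by exact_mod_cast hn
  have hf : Measurable f := f.continuous.measurable
  have hM : ∀ z, |f z| ≤ ‖f‖ := fun z => f.norm_coe_le_norm z
  set H : (Fin n → X) → ℝ := fun x => ∏ i, Real.exp (n * ∫ u in C i, f (u, x i) ∂unif01) with hH
  have hHm : Measurable H := Finset.measurable_fun_prod _ fun i _ =>
    (((cellint_measurable (C i) hf).comp (measurable_pi_apply i)).const_mul _).exp
  have hHi : Integrable H (Measure.pi fun _ : Fin n => μ) := by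
    refine bdd_integrable (M := ∏ i : Fin n, Real.exp ‖f‖) hHm fun x => ?_
    rw [hH, Finset.abs_prod]
    refine Finset.prod_le_prod (fun i _ => abs_nonneg _) fun i _ => ?_
    rw [abs_of_pos (Real.exp_pos _)]
    refine Real.exp_le_exp.2 ?_
    calc (n:ℝ) * _ ≤ n * (‖f‖ * (n:ℝ)⁻¹) := by
          gcongr; exact (le_abs_self _).trans (cellint_abs h i hM (x i))
      _ = ‖f‖ := by field_simp
  have hsub : {x : Fin n → X | Λ < Real.exp (∫ z, f z ∂(Nm C fun i => Measure.dirac (x i)) - α)} ⊆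
      {x | Λ ^ n * Real.exp (n * α) ≤ H x} := by
    intro x hx
    rw [mem_ofPred_eq] at hx ⊢
    rw [integral_nu C x hf hM] at hx
    have h1 := pow_le_pow_left₀ hΛ.le hx.le n
    rw [← Real.exp_nat_mul] at h1
    rw [hH]; dsimp only
    rw [← Real.exp_sum, ← Finset.mul_sum]
    calc _ ≤ Real.exp (n * (∑ i, ∫ u in C i, f (u, x i) ∂unif01 - α)) * Real.exp (n * α) := by
          gcongr
      _ = _ := by rw [← Real.exp_add]; congr 1; ring
  refine (measure_mono hsub).trans ?_
  have hmk := mul_meas_ge_le_integral_of_nonneg (μ := Measure.pi fun _ : Fin n => μ) (f := H)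
    (Eventually.of_forall fun x => Finset.prod_nonneg fun i _ => (Real.exp_pos _).le) hHi
    (Λ ^ n * Real.exp (n * α))
  have h2 := hmk.trans (chernoff_int μ h hn hf hM)
  have hpos : 0 < Λ ^ n := by positivity
  have h3 : Real.exp (n * α) * (Measure.pi fun _ : Fin n => μ).real
      {x | Λ ^ n * Real.exp (n * α) ≤ H x} ≤ 1 := by
    rw [mul_assoc] at h2
    exact (mul_le_iff_le_one_right hpos).1 h2
  rw [← ENNReal.ofReal_toReal (measure_ne_top _ {x | Λ ^ n * Real.exp (n * α) ≤ H x})]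
  apply ENNReal.ofReal_le_ofReal
  rw [Real.exp_neg, ← one_div, le_div_iff₀ (Real.exp_pos _), mul_comm]
  exact h3

end

end EdgeLDP
end

noncomputable section
open MeasureTheory Filter Set
open scoped ENNReal NNReal Topology BoundedContinuousFunction
set_option linter.style.haveILetI false
set_option linter.unusedSectionVars false
namespace EdgeLDP

/-! ### Logarithmic asymptotics -/

lemma log_upper {p : ℕ → ℝ≥0∞} {K α : ℝ} (hK : 0 < K)
    (h : ∀ᶠ n : ℕ in atTop, p n ≤ ENNReal.ofReal (K * Real.exp (-(n * α)))) :
    limsup (fun n : ℕ => (((n : ℝ)⁻¹ : ℝ) : EReal) * ENNReal.log (p n)) atTop ≤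
      ((-α : ℝ) : EReal) := by
  have h1 : ∀ᶠ n : ℕ in atTop, (((n : ℝ)⁻¹ : ℝ) : EReal) * ENNReal.log (p n) ≤
      (((n:ℝ)⁻¹ * Real.log K - α : ℝ) : EReal) := by
    filter_upwards [h, eventually_ge_atTop 1] with n hn hn1
    have hn0 : (0:ℝ) < n := by exact_mod_cast hn1
    have e := ENNReal.log_le_log hn
    rw [ENNReal.log_ofReal_of_pos (by positivity), Real.log_mul hK.ne' (Real.exp_pos _).ne',
      Real.log_exp] at e
    refine (mul_le_mul_of_nonneg_left e (by exact_mod_cast (inv_pos.2 hn0).le)).trans ?_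
    rw [← EReal.coe_mul]
    apply le_of_eq
    congr 1
    field_simp
    ring
  have h2 : Tendsto (fun n : ℕ => (((n:ℝ)⁻¹ * Real.log K - α : ℝ) : EReal)) atTop
      (𝓝 ((-α : ℝ) : EReal)) := by
    refine (continuous_coe_real_ereal.tendsto _).comp ?_
    have := (tendsto_inv_atTop_nhds_zero_nat (𝕜 := ℝ)).mul_const (Real.log K)
    simpa using this.sub_const α
  exact (limsup_le_limsup h1).trans h2.limsup_eq.le

lemma log_lower {p : ℕ → ℝ≥0∞} {d : ℝ}
    (h : ∀ᶠ n : ℕ in atTop, ENNReal.ofReal (Real.exp (-(n * d))) ≤ p n) :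
    ((-d : ℝ) : EReal) ≤
    liminf (fun n : ℕ => (((n : ℝ)⁻¹ : ℝ) : EReal) * ENNReal.log (p n)) atTop := by
  refine le_liminf_of_le ?_ ?_
  · isBoundedDefault
  filter_upwards [h, eventually_ge_atTop 1] with n hn hn1
  have hn0 : (0:ℝ) < n := by exact_mod_cast hn1
  have e := ENNReal.log_le_log hn
  rw [ENNReal.log_ofReal_of_pos (Real.exp_pos _), Real.log_exp] at e
  refine le_trans ?_ (mul_le_mul_of_nonneg_left e (by exact_mod_cast (inv_pos.2 hn0).le))
  rw [← EReal.coe_mul]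
  apply le_of_eq
  congr 1
  field_simp

variable {X : Type*} [MetricSpace X] [CompactSpace X] [MeasurableSpace X] [BorelSpace X]
  (μ : Measure X) [IsProbabilityMeasure μ] {W : ℝ → ℝ → ℝ}
  {φ : (Fin 2 → X) → ℝ} (G : SimpleGraph (Fin 2)) [DecidableRel G.Adj]

lemma Vstat_TT (hK2 : ∀ a b : Fin 2, G.Adj a b ↔ a ≠ b)
    (hψ : Continuous (Function.uncurry fun y y' => φ ![y, y'])) {n : ℕ} {C : Fin n → Set ℝ}
    (h : Cells n C) (Q : Fin n → Fin n → ℝ) (x : Fin n → X) :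
    Vstat G φ n Q x = TT (stp Q C) (fun y y' => φ ![y, y']) (Nm C fun i => Measure.dirac (x i)) := by
  obtain ⟨K, -, hK⟩ := exists_bound_psi hψ
  rw [Vstat_eq G hK2, TT_dirac h Q x hψ.measurable hK]

/-- the random measure -/
def nu {n : ℕ} {C : Fin n → Set ℝ} (h : Cells n C) (x : Fin n → X) :
    ProbabilityMeasure (ℝ × X) :=
  ⟨Nm C fun i => Measure.dirac (x i), (Nm_inTM h fun _ => inferInstance).1⟩

lemma nu_mem {n : ℕ} {C : Fin n → Set ℝ} (h : Cells n C) (x : Fin n → X) : nu h x ∈ TMset X :=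
  Nm_inTM h fun _ => inferInstance

lemma upper_real (hK2 : ∀ a b : Fin 2, G.Adj a b ↔ a ≠ b)
    (hW : Integrable (Function.uncurry W) (unif01.prod unif01))
    (hψ : Continuous (Function.uncurry fun y y' => φ ![y, y']))
    (Q : ∀ n : ℕ, Fin n → Fin n → ℝ) (C : ∀ n : ℕ, Fin n → Set ℝ)
    (hC : ∀ n, 1 ≤ n → Cells n (C n))
    (hcl : ∀ ε : ℝ, 0 < ε → ∀ᶠ n in atTop, ∀ ν : Measure (ℝ × X), inTM ν →
        |TT (stp (Q n) (C n)) (fun y y' => φ ![y, y']) ν - TT W (fun y y' => φ ![y, y']) ν| ≤ ε)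
    (F : Set ℝ) (α : ℝ)
    (hα : ∀ t ∈ closure F, ENNReal.ofReal α < rate0 G W φ μ t) :
    ∃ K : ℝ, 0 < K ∧ ∀ᶠ n : ℕ in atTop, (Measure.pi fun _ : Fin n => μ)
      {x | Vstat G φ n (Q n) x ∈ F} ≤ ENNReal.ofReal (K * Real.exp (-(n * α))) := by
  have hTc := continuousOn_Tf hW hψ
  set O : (ℝ × X →ᵇ ℝ) → Set (ProbabilityMeasure (ℝ × X)) := fun f =>
    {ν | ∫ z, Real.exp (f z) ∂(unif01.prod μ) <
      Real.exp (∫ z, f z ∂(ν : Measure (ℝ × X)) - α)} with hO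
  have hOo : ∀ f, IsOpen (O f) := by
    intro f
    have := ProbabilityMeasure.continuous_integral_boundedContinuousFunction f
    exact isOpen_lt continuous_const (by fun_prop)
  have hK0 : IsCompact (TMset X ∩ Tf W φ ⁻¹' closure F) :=
    isCompact_TMset.of_isClosed_subset
      (hTc.preimage_isClosed_of_isClosed isCompact_TMset.isClosed isClosed_closure)
      inter_subset_left
  have hcov : TMset X ∩ Tf W φ ⁻¹' closure F ⊆ ⋃ f, O f := by
    rintro ν ⟨hν, hνF⟩
    have hν' : inTM (ν : Measure (ℝ × X)) := hν
    by_contra hne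
    have hD : ∀ f : ℝ × X →ᵇ ℝ, Real.exp (∫ x, f x ∂(ν : Measure (ℝ × X)) - α) ≤
        ∫ x, Real.exp (f x) ∂(unif01.prod μ) := by
      intro f
      by_contra hf
      exact hne (mem_iUnion.2 ⟨f, not_le.1 hf⟩)
    have h1 := DV2 hD
    have h2 := hα _ hνF
    refine absurd (h2.trans_le ?_) (lt_irrefl _)
    refine (iInf_le (fun ν : {ν : Measure (ℝ × X) //
      inTM ν ∧ KLdiv ν (unif01.prod μ) ≠ ⊤ ∧ TWphi G W φ ν = Tf W φ _} =>
        KLdiv ν.1 (unif01.prod μ))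
      ⟨ν, hν', ne_top_of_le_ne_top ENNReal.ofReal_ne_top h1, ?_⟩).trans h1
    rw [TWphi_eq G hK2 W φ _ hν'.1]; rfl
  obtain ⟨s, hs⟩ := hK0.elim_finite_subcover O hOo hcov
  have hK1 : IsCompact (TMset X \ ⋃ f ∈ s, O f) :=
    isCompact_TMset.diff (isOpen_biUnion fun f _ => hOo f)
  have hK2' : IsCompact (Tf W φ '' (TMset X \ ⋃ f ∈ s, O f)) :=
    hK1.image_of_continuousOn (hTc.mono diff_subset)
  obtain ⟨δ, hδ, hth⟩ := hK2'.exists_thickening_subset_open (isClosed_closure (s := F)).isOpen_compl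
    (by
      rintro _ ⟨ν, ⟨hν, hνO⟩, rfl⟩ hF
      exact hνO (hs ⟨hν, hF⟩))
  refine ⟨(s.card : ℝ) + 1, by positivity, ?_⟩
  filter_upwards [hcl (δ / 2) (half_pos hδ), eventually_ge_atTop 1] with n hn hn1
  have hCn := hC n hn1
  have hsub : {x : Fin n → X | Vstat G φ n (Q n) x ∈ F} ⊆
      ⋃ f ∈ s, {x : Fin n → X | ∫ z, Real.exp (f z) ∂(unif01.prod μ) <
        Real.exp (∫ z, f z ∂(Nm (C n) fun i => Measure.dirac (x i)) - α)} := by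
    intro x hx
    rw [mem_ofPred_eq] at hx
    by_contra hne
    have hmem : nu hCn x ∈ TMset X \ ⋃ f ∈ s, O f := by
      refine ⟨nu_mem hCn x, fun hmem => hne ?_⟩
      simp only [mem_iUnion] at hmem ⊢
      obtain ⟨f, hf, hf'⟩ := hmem
      exact ⟨f, hf, hf'⟩
    refine hth (Metric.mem_thickening_iff.2 ⟨_, mem_image_of_mem _ hmem, ?_⟩) (subset_closure hx)
    rw [Vstat_TT G hK2 hψ hCn, Real.dist_eq]
    exact (hn _ (nu_mem hCn x)).trans_lt (by linarith)
  refine (measure_mono hsub).trans ((measure_biUnion_finset_le _ _).trans ?_)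
  refine (Finset.sum_le_sum fun f _ => chernoff μ hCn hn1 f α).trans ?_
  rw [Finset.sum_const, nsmul_eq_mul, ENNReal.ofReal_mul (by positivity)]
  gcongr
  rw [ENNReal.ofReal_add (by positivity) zero_le_one, ENNReal.ofReal_natCast]
  exact le_self_add

lemma upper (hK2 : ∀ a b : Fin 2, G.Adj a b ↔ a ≠ b)
    (hW : Integrable (Function.uncurry W) (unif01.prod unif01))
    (hψ : Continuous (Function.uncurry fun y y' => φ ![y, y']))
    (Q : ∀ n : ℕ, Fin n → Fin n → ℝ) (C : ∀ n : ℕ, Fin n → Set ℝ)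
    (hC : ∀ n, 1 ≤ n → Cells n (C n))
    (hcl : ∀ ε : ℝ, 0 < ε → ∀ᶠ n in atTop, ∀ ν : Measure (ℝ × X), inTM ν →
        |TT (stp (Q n) (C n)) (fun y y' => φ ![y, y']) ν - TT W (fun y y' => φ ![y, y']) ν| ≤ ε)
    (F : Set ℝ) :
    Filter.atTop.limsup (fun n : ℕ =>
        (((n : ℝ)⁻¹ : ℝ) : EReal) * ENNReal.log ((Measure.pi fun _ : Fin n => μ)
          {x | Vstat G φ n (Q n) x ∈ F})) ≤
      -(⨅ x ∈ closure F, (rate0 G W φ μ x : EReal)) := by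
  rw [EReal.le_neg]
  rw [← EReal.ge_of_forall_gt_iff_ge]
  intro α hα
  rw [EReal.le_neg, ← EReal.coe_neg]
  rcases lt_or_ge α 0 with h0 | h0
  · refine (log_upper (K := 1) (α := 0) one_pos (Eventually.of_forall fun n => ?_)).trans ?_
    · simpa using prob_le_one
    · exact_mod_cast (by linarith : -(0:ℝ) ≤ -α)
  · obtain ⟨K, hK, h⟩ := upper_real μ G hK2 hW hψ Q C hC hcl F α (fun t ht => by
      have h1 : (α : EReal) < (rate0 G W φ μ t : EReal) :=
        hα.trans_le (iInf₂_le t ht)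
      rw [← EReal.coe_ennreal_lt_coe_ennreal_iff, EReal.coe_ennreal_ofReal, max_eq_left h0]
      exact h1)
    exact log_upper hK h

end EdgeLDP
end

noncomputable section
open MeasureTheory Filter Set
open scoped ENNReal NNReal Topology BoundedContinuousFunction
set_option linter.style.haveILetI false
set_option linter.unusedSectionVars false
namespace EdgeLDP

/-! ### Lower bound: change of measure -/

section generic
variable {Z : Type*} [MeasurableSpace Z] {n : ℕ}

lemma pi_withDensity_common (p r : Fin n → Measure Z) [∀ i, IsProbabilityMeasure (p i)]
    [∀ i, IsProbabilityMeasure (r i)] {h : Z → ℝ≥0∞} (hh : Measurable h)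
    (hr : ∀ i, r i = (p i).withDensity h) :
    Measure.pi r = (Measure.pi p).withDensity (fun z => ∏ i, h (z i)) := by
  symm
  have key : ∀ s : Fin n → Set Z, (∀ i, MeasurableSet (s i)) →
      (Measure.pi p).withDensity (fun z => ∏ i, h (z i)) (univ.pi s) = ∏ i, r i (s i) := by
    intro s hs
    rw [withDensity_apply _ (MeasurableSet.univ_pi hs),
      ← lintegral_indicator (MeasurableSet.univ_pi hs)]
    have e : ∀ z : Fin n → Z, (univ.pi s).indicator (fun z => ∏ i, h (z i)) z =
        ∏ i, (s i).indicator h (z i) := by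
      intro z
      by_cases hz : z ∈ univ.pi s
      · rw [indicator_of_mem hz]
        refine Finset.prod_congr rfl fun i _ => ?_
        rw [indicator_of_mem (hz i (mem_univ i))]
      · rw [indicator_of_notMem hz]
        have : ∃ i, z i ∉ s i := by
          by_contra hc
          push Not at hc
          exact hz fun i _ => hc i
        obtain ⟨i, hi⟩ := this
        exact (Finset.prod_eq_zero (Finset.mem_univ i) (indicator_of_notMem hi _)).symm
    simp_rw [e]
    have hi := ProbabilityTheory.iIndepFun_pi (μ := p) (X := fun i => (s i).indicator h)
      (fun i => (hh.indicator (hs i)).aemeasurable)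
    rw [ProbabilityTheory.lintegral_prod_eq_prod_lintegral_of_indepFun Finset.univ
      (fun i (z : Fin n → Z) => (s i).indicator h (z i)) hi
      (fun i => (hh.indicator (hs i)).comp (measurable_pi_apply i))]
    refine Finset.prod_congr rfl fun i _ => ?_
    rw [hr i, withDensity_apply _ (hs i), ← lintegral_indicator (hs i)]
    exact (measurePreserving_eval p i).lintegral_comp (hh.indicator (hs i))
  exact (Measure.pi_eq key).symm

lemma pi_llr (p r : Fin n → Measure Z) [∀ i, IsProbabilityMeasure (p i)]
    [∀ i, IsProbabilityMeasure (r i)] {h : Z → ℝ≥0∞} (hh : Measurable h)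
    (hr : ∀ i, r i = (p i).withDensity h)
    (hi : ∀ i, Integrable (fun z => Real.log (h z).toReal) (r i)) :
    Measure.pi r ≪ Measure.pi p ∧ Integrable (llr (Measure.pi r) (Measure.pi p)) (Measure.pi r) ∧
    ∫ z, llr (Measure.pi r) (Measure.pi p) z ∂(Measure.pi r) =
      ∑ i, ∫ z, Real.log (h z).toReal ∂(r i) := by
  have hw := pi_withDensity_common p r hh hr
  have hm : Measurable fun z : Fin n → Z => ∏ i, h (z i) :=
    Finset.measurable_prod _ fun i _ => hh.comp (measurable_pi_apply i)
  have hac : Measure.pi r ≪ Measure.pi p := by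
    rw [hw]; exact withDensity_absolutelyContinuous _ _
  have h0 : ∀ i, ∀ᵐ z ∂(Measure.pi r), h (z i) ≠ 0 := by
    intro i
    have : ∀ᵐ z ∂(r i), h z ≠ 0 := by
      rw [hr i, ae_withDensity_iff hh]
      exact Eventually.of_forall fun z hz => hz
    exact (measurePreserving_eval r i).quasiMeasurePreserving.ae this
  have ht : ∀ i, ∀ᵐ z ∂(Measure.pi r), h (z i) ≠ ⊤ := by
    intro i
    have : ∀ᵐ z ∂(r i), h z ≠ ⊤ := by
      have hp : ∀ᵐ z ∂(p i), h z < ⊤ := by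
        refine ae_lt_top hh ?_
        have := measure_ne_top (r i) univ
        rwa [hr i, withDensity_apply _ MeasurableSet.univ, setLIntegral_univ] at this
      rw [hr i]
      exact (withDensity_absolutelyContinuous (p i) h).ae_le (hp.mono fun z hz => hz.ne)
    exact (measurePreserving_eval r i).quasiMeasurePreserving.ae this
  have hae : llr (Measure.pi r) (Measure.pi p) =ᵐ[Measure.pi r]
      fun z => ∑ i, Real.log (h (z i)).toReal := by
    have h1 : (Measure.pi r).rnDeriv (Measure.pi p) =ᵐ[Measure.pi p]
        fun z => ∏ i, h (z i) := by
      rw [hw]; exact Measure.rnDeriv_withDensity _ hm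
    filter_upwards [hac.ae_le h1, ae_all_iff.2 h0, ae_all_iff.2 ht] with z hz hz0 hzt
    rw [llr, hz, ENNReal.toReal_prod, Real.log_prod]
    intro i _
    exact ENNReal.toReal_ne_zero.2 ⟨hz0 i, hzt i⟩
  have hii : ∀ i, Integrable (fun z : Fin n → Z => Real.log (h (z i)).toReal) (Measure.pi r) :=
    fun i => (measurePreserving_eval r i).integrable_comp_of_integrable (hi i)
  refine ⟨hac, (integrable_congr hae).2 (integrable_finsetSum _ fun i _ => hii i), ?_⟩
  rw [integral_congr_ae hae, integral_finsetSum _ fun i _ => hii i]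
  refine Finset.sum_congr rfl fun i _ => ?_
  rw [← (measurePreserving_eval r i).map_eq, integral_map (measurable_pi_apply i).aemeasurable]
  rw [(measurePreserving_eval r i).map_eq]; exact (hi i).aestronglyMeasurable

lemma entropy_lower {K P : Measure Z} [IsProbabilityMeasure K] [IsProbabilityMeasure P]
    (hac : K ≪ P) (hi : Integrable (llr K P) K) {A : Set Z} (hA : MeasurableSet A)
    (hRA : 0 < K.real A) :
    Real.exp (-((∫ z, llr K P z ∂K + Real.log 2) / K.real A)) ≤ P.real A := by
  have hPA : 0 < P.real A := by
    rw [measureReal_def, ENNReal.toReal_pos_iff]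
    refine ⟨?_, measure_lt_top _ _⟩
    rw [pos_iff_ne_zero]
    intro h0
    rw [measureReal_def, hac h0] at hRA
    simp at hRA
  set l := -Real.log (P.real A) with hl
  have hl0 : 0 ≤ l := by
    have := Real.log_nonpos hPA.le measureReal_le_one
    linarith
  have hfm : Measurable (A.indicator fun _ : Z => l) := measurable_const.indicator hA
  have hfb : ∀ z, |A.indicator (fun _ : Z => l) z| ≤ l := by
    intro z
    by_cases hz : z ∈ A
    · rw [indicator_of_mem hz, abs_of_nonneg hl0]
    · rw [indicator_of_notMem hz]; simpa using hl0
  have := DV1 hac hi (bdd_integrable hfm hfb) (exp_bdd_integrable hfm hfb)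
  have e1 : ∫ z, A.indicator (fun _ : Z => l) z ∂K = l * K.real A := by
    rw [integral_indicator_const _ hA, smul_eq_mul, mul_comm]
  have e2 : ∫ z, Real.exp (A.indicator (fun _ : Z => l) z) ∂P ≤ 2 := by
    have : ∀ z, Real.exp (A.indicator (fun _ : Z => l) z) ≤
        1 + A.indicator (fun _ : Z => Real.exp l) z := by
      intro z
      by_cases hz : z ∈ A
      · rw [indicator_of_mem hz, indicator_of_mem hz]; linarith
      · rw [indicator_of_notMem hz, indicator_of_notMem hz]; simp
    refine (integral_mono (exp_bdd_integrable hfm hfb)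
      ((integrable_const 1).add ((integrable_const _).indicator hA)) this).trans ?_
    simp only [Pi.add_apply]
    rw [integral_add (integrable_const 1) ((integrable_const _).indicator hA),
      integral_indicator_const _ hA, hl, Real.exp_neg, Real.exp_log hPA, smul_eq_mul,
      mul_inv_cancel₀ hPA.ne']
    simp; norm_num
  have e3 : 0 < ∫ z, Real.exp (A.indicator (fun _ : Z => l) z) ∂P :=
    integral_exp_pos (exp_bdd_integrable hfm hfb)
  rw [e1] at this
  have h4 := Real.log_le_log e3 e2
  have h5 : l ≤ (∫ z, llr K P z ∂K + Real.log 2) / K.real A := by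
    rw [le_div_iff₀ hRA]; linarith
  calc Real.exp (-((∫ z, llr K P z ∂K + Real.log 2) / K.real A)) ≤ Real.exp (-l) :=
        Real.exp_le_exp.2 (neg_le_neg h5)
    _ = P.real A := by rw [hl, neg_neg, Real.exp_log hPA]

end generic

end EdgeLDP
end

noncomputable section
open MeasureTheory Filter Set
open scoped ENNReal NNReal Topology BoundedContinuousFunction
set_option linter.style.haveILetI false
set_option linter.unusedSectionVars false
namespace EdgeLDP

section
variable {X : Type*} [MeasurableSpace X] {n : ℕ} {C : Fin n → Set ℝ}

lemma rect_prob (h : Cells n C) (hn : 1 ≤ n) {ν : Measure (ℝ × X)} (hν : inTM ν) (i : Fin n) :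
    IsProbabilityMeasure ((n : ℝ≥0∞) • ν.restrict (C i ×ˢ univ)) := by
  refine ⟨?_⟩
  have := (cm_prob h hn hν i).measure_univ
  rw [Measure.smul_apply, cm_apply _ (h.meas i) MeasurableSet.univ] at this
  rw [Measure.smul_apply, Measure.restrict_apply_univ, this]

lemma prod_inTM (μ : Measure X) [IsProbabilityMeasure μ] : inTM (unif01.prod μ) :=
  ⟨inferInstance, by simp⟩

lemma cm_rho (h : Cells n C) (hn : 1 ≤ n) (μ : Measure X) [IsProbabilityMeasure μ] (i : Fin n) :
    (n : ℝ≥0∞) • cm (unif01.prod μ) (C i) = μ := by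
  ext A hA
  rw [Measure.smul_apply, cm_apply _ (h.meas i) hA, Measure.prod_prod, h.vol i, smul_eq_mul,
    ← mul_assoc, ENNReal.mul_inv_cancel (by simp; omega) (by simp), one_mul]

lemma pi_map_snd (h : Cells n C) (hn : 1 ≤ n) {ν : Measure (ℝ × X)} (hν : inTM ν) :
    (Measure.pi fun i => (n : ℝ≥0∞) • ν.restrict (C i ×ˢ univ)).map
      (fun z i => (z i).2) = Measure.pi fun i => (n : ℝ≥0∞) • cm ν (C i) := by
  have := rect_prob h hn hν
  have hp := cm_prob h hn hν
  have e : ∀ i, ((n : ℝ≥0∞) • ν.restrict (C i ×ˢ univ)).map Prod.snd = (n : ℝ≥0∞) • cm ν (C i) :=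
    fun i => by rw [Measure.map_smul, cm]
  refine (measurePreserving_pi _ _ (f := fun _ => Prod.snd) fun i => ⟨measurable_snd, e i⟩).map_eq

lemma sum_rect (h : Cells n C) {ν : Measure (ℝ × X)} (hν : inTM ν) :
    ∑ i, ν.restrict (C i ×ˢ univ) = ν := by
  have hd : Pairwise fun i j => Disjoint (C i ×ˢ (univ : Set X)) (C j ×ˢ univ) := by
    intro i j hij
    exact Disjoint.set_prod_left (h.disj hij) _ _
  rw [← Measure.sum_fintype, ← Measure.restrict_iUnion hd fun i => (h.meas i).prod MeasurableSet.univ]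
  refine Measure.restrict_eq_self_of_ae_mem ?_
  have := (inTM.mp hν).quasiMeasurePreserving.ae h.cov
  filter_upwards [this] with z hz
  obtain ⟨i, hi⟩ := mem_iUnion.1 hz
  exact mem_iUnion.2 ⟨i, hi, mem_univ _⟩

lemma change_measure (h : Cells n C) (hn : 1 ≤ n) (μ : Measure X) [IsProbabilityMeasure μ]
    {ν : Measure (ℝ × X)} (hν : inTM ν)
    (hac : ν ≪ unif01.prod μ) (hi : Integrable (llr ν (unif01.prod μ)) ν)
    {A : Set (Fin n → X)} (hA : MeasurableSet A)
    (hpos : 0 < (Measure.pi fun i => (n : ℝ≥0∞) • cm ν (C i)).real A) :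
    Real.exp (-((n * ∫ z, llr ν (unif01.prod μ) z ∂ν + Real.log 2) /
      (Measure.pi fun i => (n : ℝ≥0∞) • cm ν (C i)).real A)) ≤
      (Measure.pi fun _ : Fin n => μ).real A := by
  have := hν.1
  have hp := rect_prob h hn (prod_inTM μ)
  have hr := rect_prob h hn hν
  set p : Fin n → Measure (ℝ × X) :=
    fun i => (n : ℝ≥0∞) • (unif01.prod μ).restrict (C i ×ˢ univ) with hpd
  set r : Fin n → Measure (ℝ × X) := fun i => (n : ℝ≥0∞) • ν.restrict (C i ×ˢ univ) with hrd
  have : ∀ i, IsProbabilityMeasure (p i) := hp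
  have : ∀ i, IsProbabilityMeasure (r i) := hr
  have hrp : ∀ i, r i = (p i).withDensity (ν.rnDeriv (unif01.prod μ)) := by
    intro i
    simp only [hpd, hrd]
    rw [withDensity_smul_measure, ← restrict_withDensity ((h.meas i).prod MeasurableSet.univ),
      Measure.withDensity_rnDeriv_eq _ _ hac]
  have hii : ∀ i, Integrable (llr ν (unif01.prod μ)) (ν.restrict (C i ×ˢ univ)) :=
    fun i => hi.restrict
  obtain ⟨h1, h2, h3⟩ := pi_llr p r (Measure.measurable_rnDeriv ν (unif01.prod μ)) hrp
    (fun i => (hii i).smul_measure (by simp))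
  have h4 : ∑ i, ∫ z, Real.log (ν.rnDeriv (unif01.prod μ) z).toReal ∂(r i) =
      n * ∫ z, llr ν (unif01.prod μ) z ∂ν := by
    have e := integral_finsetSum_measure (s := Finset.univ) (f := llr ν (unif01.prod μ))
      (μ := fun i => ν.restrict (C i ×ˢ univ)) (fun i _ => hii i)
    rw [sum_rect h hν] at e
    rw [e, Finset.mul_sum]
    refine Finset.sum_congr rfl fun i _ => ?_
    simp only [hrd]
    rw [integral_smul_measure]
    simp [llr]
  rw [h4] at h3
  have hsm : Measurable fun (z : Fin n → ℝ × X) i => (z i).2 := by fun_prop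
  have hR : (Measure.pi r).real ((fun z i => (z i).2) ⁻¹' A) =
      (Measure.pi fun i => (n : ℝ≥0∞) • cm ν (C i)).real A := by
    rw [← pi_map_snd h hn hν, map_measureReal_apply hsm hA]
  have hP : (Measure.pi p).real ((fun z i => (z i).2) ⁻¹' A) =
      (Measure.pi fun _ : Fin n => μ).real A := by
    have e : (Measure.pi fun _ : Fin n => μ) =
        Measure.pi fun i => (n : ℝ≥0∞) • cm (unif01.prod μ) (C i) := by
      congr 1; ext1 i; rw [cm_rho h hn μ i]
    rw [e, ← pi_map_snd h hn (prod_inTM μ), map_measureReal_apply hsm hA]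
  have := entropy_lower h1 h2 (hsm hA) (by rw [hR]; exact hpos)
  rwa [h3, hR, hP] at this

end

section
variable {X : Type*} [MetricSpace X] [CompactSpace X] [MeasurableSpace X] [BorelSpace X]
  {n : ℕ} {C : Fin n → Set ℝ}

lemma lln (h : Cells n C) (hn : 1 ≤ n) (m : Fin n → Measure X) [hm : ∀ i, IsProbabilityMeasure (m i)]
    {f : ℝ × X → ℝ} (hf : Measurable f) {M : ℝ} (hM : ∀ z, |f z| ≤ M) {ε : ℝ} (hε : 0 < ε) :
    Measure.pi m {x | ε ≤ |∫ z, f z ∂(Nm C fun i => Measure.dirac (x i)) - ∫ z, f z ∂(Nm C m)|} ≤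
      ENNReal.ofReal (M ^ 2 / ε ^ 2 * (n:ℝ)⁻¹) := by
  have hn0 : (0:ℝ) < n := by exact_mod_cast hn
  set Y : Fin n → X → ℝ := fun i y => ∫ u in C i, f (u, y) ∂unif01 with hY
  have hYm : ∀ i, Measurable (Y i) := fun i => cellint_measurable (C i) hf
  have hYb : ∀ i y, |Y i y| ≤ M * (n:ℝ)⁻¹ := fun i y => cellint_abs h i hM y
  have hL : ∀ i, MemLp (Y i) 2 (m i) := fun i =>
    MemLp.of_bound (hYm i).aestronglyMeasurable (M * (n:ℝ)⁻¹) (Eventually.of_forall (hYb i))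
  have hLp : ∀ i, MemLp (fun x : Fin n → X => Y i (x i)) 2 (Measure.pi m) := fun i =>
    (hL i).comp_measurePreserving (measurePreserving_eval m i)
  have hLs : MemLp (∑ i, fun x : Fin n → X => Y i (x i)) 2 (Measure.pi m) :=
    memLp_finsetSum' _ fun i _ => hLp i
  have hv : ProbabilityTheory.variance (∑ i, fun x : Fin n → X => Y i (x i)) (Measure.pi m) ≤
      M ^ 2 * (n:ℝ)⁻¹ := by
    rw [ProbabilityTheory.variance_sum_pi hL]
    have : ∀ i, ProbabilityTheory.variance (Y i) (m i) ≤ (M * (n:ℝ)⁻¹) ^ 2 := by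
      intro i
      have := ProbabilityTheory.variance_le_sq_of_bounded (μ := m i) (X := Y i)
        (a := -(M * (n:ℝ)⁻¹)) (b := M * (n:ℝ)⁻¹)
        (Eventually.of_forall fun y => abs_le.1 (hYb i y)) (hYm i).aemeasurable
      refine this.trans (le_of_eq ?_)
      ring
    refine (Finset.sum_le_sum fun i _ => this i).trans (le_of_eq ?_)
    simp
    field_simp
  have hmean : ∫ x, (∑ i, fun x : Fin n → X => Y i (x i)) x ∂(Measure.pi m) =
      ∫ z, f z ∂(Nm C m) := by
    rw [integral_Nm C m hf hM]
    simp only [Finset.sum_apply]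
    rw [integral_finsetSum _ fun i _ => (hLp i).integrable one_le_two]
    refine Finset.sum_congr rfl fun i _ => ?_
    exact (integral_comp_eval (μ := m) (hYm i).aestronglyMeasurable)
  have := ProbabilityTheory.meas_ge_le_variance_div_sq hLs hε
  rw [hmean] at this
  refine le_trans (le_of_eq ?_) (this.trans (ENNReal.ofReal_le_ofReal ?_))
  · congr 1
    ext x
    simp only [Finset.sum_apply]
    rw [mem_ofPred_eq, integral_nu C x hf hM]
    rfl
  · rw [div_mul_eq_mul_div]
    gcongr

end
end EdgeLDP
end

noncomputable section
open MeasureTheory Filter Set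
open scoped ENNReal NNReal Topology BoundedContinuousFunction
set_option linter.style.haveILetI false
set_option linter.unusedSectionVars false
namespace EdgeLDP

lemma tens_close {m : ℕ} (a b a' b' : Fin m → ℝ) {M κ : ℝ} (hM : 0 ≤ M) (hb : ∀ l, |b l| ≤ M)
    (ha' : ∀ l, |a' l| ≤ M) (ha : ∀ l, |a l - a' l| ≤ κ) (hbb : ∀ l, |b l - b' l| ≤ κ) :
    |∑ l, a l * b l - ∑ l, a' l * b' l| ≤ m * (2 * M * κ) := by
  rw [← Finset.sum_sub_distrib]
  have : ∀ l, |a l * b l - a' l * b' l| ≤ 2 * M * κ := by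
    intro l
    have e : a l * b l - a' l * b' l = (a l - a' l) * b l + a' l * (b l - b' l) := by ring
    rw [e]
    refine (abs_add_le _ _).trans ?_
    rw [abs_mul, abs_mul]
    have hκ : 0 ≤ κ := (abs_nonneg _).trans (ha l)
    have h1 := mul_le_mul (ha l) (hb l) (abs_nonneg _) hκ
    have h2 := mul_le_mul (ha' l) (hbb l) (abs_nonneg _) hM
    linarith
  refine (Finset.abs_sum_le_sum_abs _ _).trans ((Finset.sum_le_sum fun l _ => this l).trans ?_)
  simp

section
variable {X : Type*} [MetricSpace X] [CompactSpace X] [MeasurableSpace X] [BorelSpace X]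
  (μ : Measure X) [IsProbabilityMeasure μ] {W : ℝ → ℝ → ℝ}
  {φ : (Fin 2 → X) → ℝ} (G : SimpleGraph (Fin 2)) [DecidableRel G.Adj]

lemma Vstat_measurable (hK2 : ∀ a b : Fin 2, G.Adj a b ↔ a ≠ b)
    (hψ : Continuous (Function.uncurry fun y y' => φ ![y, y'])) (n : ℕ) (Q : Fin n → Fin n → ℝ) :
    Measurable fun x : Fin n → X => Vstat G φ n Q x := by
  simp only [Vstat_eq G hK2 φ n Q]
  refine Finset.measurable_sum _ fun i _ => Finset.measurable_sum _ fun j _ => ?_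
  refine (Measurable.mul_const ?_ _).div_const _
  have hp : Measurable fun x : Fin n → X => (x i, x j) :=
    (measurable_pi_apply i).prodMk (measurable_pi_apply j)
  exact hψ.measurable.comp hp

lemma abs_integral_le_of_bound {Z : Type*} [MeasurableSpace Z] (ν : Measure Z)
    [IsProbabilityMeasure ν] {f : Z → ℝ} {M : ℝ} (hM : ∀ z, |f z| ≤ M) : |∫ z, f z ∂ν| ≤ M := by
  have := norm_integral_le_of_norm_le_const (μ := ν) (f := f) (C := M)
    (Eventually.of_forall hM)
  simpa using this

lemma lower_event (hK2 : ∀ a b : Fin 2, G.Adj a b ↔ a ≠ b)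
    (hW : Integrable (Function.uncurry W) (unif01.prod unif01))
    (hψ : Continuous (Function.uncurry fun y y' => φ ![y, y']))
    (Q : ∀ n : ℕ, Fin n → Fin n → ℝ) (C : ∀ n : ℕ, Fin n → Set ℝ)
    (hC : ∀ n, 1 ≤ n → Cells n (C n))
    (hcl : ∀ ε : ℝ, 0 < ε → ∀ᶠ n in atTop, ∀ ν : Measure (ℝ × X), inTM ν →
        |TT (stp (Q n) (C n)) (fun y y' => φ ![y, y']) ν - TT W (fun y y' => φ ![y, y']) ν| ≤ ε)
    {ν : Measure (ℝ × X)} (hν : inTM ν) {ε δ : ℝ} (hε : 0 < ε) (hδ : 0 < δ) :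
    ∀ᶠ n : ℕ in atTop, 1 - δ ≤ (Measure.pi fun i => (n : ℝ≥0∞) • cm ν (C n i)).real
      {x | |Vstat G φ n (Q n) x - TT W (fun y y' => φ ![y, y']) ν| < ε} := by
  set ψ : X → X → ℝ := fun y y' => φ ![y, y'] with hψd
  obtain ⟨K, hK0, hK⟩ := exists_bound_psi hψ
  have hε8 : 0 < ε / 8 := by positivity
  obtain ⟨m, f, g, hfg⟩ := tensor_TT hW hψ hε8
  obtain ⟨M, hM0, hMf, hMg⟩ : ∃ M : ℝ, 0 ≤ M ∧ (∀ l z, |f l z| ≤ M) ∧ (∀ l z, |g l z| ≤ M) := by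
    refine ⟨∑ l, (‖f l‖ + ‖g l‖), Finset.sum_nonneg fun l _ => by positivity, ?_, ?_⟩
    · intro l z
      have h1 := (f l).norm_coe_le_norm z
      have h2 := Finset.single_le_sum (f := fun l => ‖f l‖ + ‖g l‖)
        (fun l _ => by positivity) (Finset.mem_univ l)
      have h3 := norm_nonneg (g l)
      rw [Real.norm_eq_abs] at h1
      linarith
    · intro l z
      have h1 := (g l).norm_coe_le_norm z
      have h2 := Finset.single_le_sum (f := fun l => ‖f l‖ + ‖g l‖)
        (fun l _ => by positivity) (Finset.mem_univ l)
      have h3 := norm_nonneg (f l)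
      rw [Real.norm_eq_abs] at h1
      linarith
  set κ : ℝ := ε / 8 / (m * (2 * M) + 1) with hκ
  have hκ0 : 0 < κ := by positivity
  have hκm : m * (2 * M * κ) ≤ ε / 8 := by
    have : m * (2 * M * κ) = (ε / 8) * ((m * (2 * M)) / (m * (2 * M) + 1)) := by
      rw [hκ]; field_simp
    rw [this]
    have h1 : (m * (2 * M)) / (m * (2 * M) + 1) ≤ 1 := by
      rw [div_le_one (by positivity)]; linarith
    exact mul_le_of_le_one_right hε8.le h1
  have hlim : Tendsto (fun n : ℕ => 2 * m * (M ^ 2 / κ ^ 2) * (n:ℝ)⁻¹) atTop (𝓝 0) := by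
    simpa using (tendsto_inv_atTop_nhds_zero_nat (𝕜 := ℝ)).const_mul (2 * m * (M ^ 2 / κ ^ 2))
  filter_upwards [hcl (ε / 8) hε8, eventually_ge_atTop 1, hlim.eventually_le_const hδ]
    with n hn hn1 hnδ
  have h := hC n hn1
  have hp := cm_prob h hn1 hν
  set mm : Fin n → Measure X := fun i => (n : ℝ≥0∞) • cm ν (C n i) with hmm
  have hp' : ∀ i, IsProbabilityMeasure (mm i) := hp
  have hbar : inTM (Nm (C n) mm) := Nm_inTM h hp'
  set A := {x | |Vstat G φ n (Q n) x - TT W ψ ν| < ε} with hA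
  have hAm : MeasurableSet A := by
    have := Vstat_measurable G hK2 hψ n (Q n)
    exact measurableSet_lt ((this.sub_const _).abs) measurable_const
  let Bf : Fin m → Set (Fin n → X) := fun l => {x | κ ≤
    |∫ z, f l z ∂(Nm (C n) fun i => Measure.dirac (x i)) - ∫ z, f l z ∂(Nm (C n) mm)|}
  let Bg : Fin m → Set (Fin n → X) := fun l => {x | κ ≤
    |∫ z, g l z ∂(Nm (C n) fun i => Measure.dirac (x i)) - ∫ z, g l z ∂(Nm (C n) mm)|}
  have hsub : Aᶜ ⊆ ⋃ l, (Bf l ∪ Bg l) := by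
    intro x hx
    by_contra hc
    apply hx
    simp only [mem_iUnion, mem_union, not_exists, not_or, Bf, Bg, mem_ofPred_eq, not_le] at hc
    have hxn : inTM (Nm (C n) fun i => Measure.dirac (x i)) := Nm_inTM h fun i => inferInstance
    have := hxn.1
    have := hbar.1
    have t1 := tens_close
      (fun l => ∫ z, f l z ∂(Nm (C n) fun i => Measure.dirac (x i)))
      (fun l => ∫ z, g l z ∂(Nm (C n) fun i => Measure.dirac (x i)))
      (fun l => ∫ z, f l z ∂(Nm (C n) mm)) (fun l => ∫ z, g l z ∂(Nm (C n) mm)) hM0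
      (fun l => abs_integral_le_of_bound _ (hMg l)) (fun l => abs_integral_le_of_bound _ (hMf l))
      (fun l => (hc l).1.le) (fun l => (hc l).2.le)
    have t2 := hfg _ hxn
    have t3 := hfg _ hbar
    have t4 := hn _ hxn
    have t5 := hn _ hbar
    have t6 := hn _ hν
    rw [← Vstat_TT G hK2 hψ h (Q n) x] at t4
    have t7 : TT (stp (Q n) (C n)) ψ (Nm (C n) mm) = TT (stp (Q n) (C n)) ψ ν :=
      TT_bar h hn1 (Q n) hν hψ.measurable hK
    rw [t7] at t5
    rw [hA, mem_ofPred_eq]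
    rw [abs_le] at t1 t2 t3 t4 t5 t6
    rw [abs_lt]
    constructor <;> linarith [t1.1, t1.2, t2.1, t2.2, t3.1, t3.2, t4.1, t4.2, t5.1, t5.2,
      t6.1, t6.2]
  have hmeas : (Measure.pi mm) Aᶜ ≤ ENNReal.ofReal δ := by
    have hb : ∀ l, (Measure.pi mm) (Bf l ∪ Bg l) ≤
        ENNReal.ofReal (2 * (M ^ 2 / κ ^ 2 * (n:ℝ)⁻¹)) := by
      intro l
      refine (measure_union_le _ _).trans ?_
      rw [two_mul, ENNReal.ofReal_add (by positivity) (by positivity)]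
      exact add_le_add (lln h hn1 mm (f l).continuous.measurable (hMf l) hκ0)
        (lln h hn1 mm (g l).continuous.measurable (hMg l) hκ0)
    refine (measure_mono hsub).trans ((measure_iUnion_le _).trans ?_)
    rw [tsum_fintype]
    refine (Finset.sum_le_sum fun l _ => hb l).trans ?_
    rw [← ENNReal.ofReal_sum_of_nonneg fun l _ => by positivity]
    apply ENNReal.ofReal_le_ofReal
    rw [Finset.sum_const, Finset.card_univ, Fintype.card_fin, nsmul_eq_mul]
    refine le_trans (le_of_eq ?_) hnδ
    ring
  have h1 : (Measure.pi mm).real Aᶜ ≤ δ := ENNReal.toReal_le_of_le_ofReal hδ.le hmeas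
  rw [probReal_compl_eq_one_sub hAm] at h1
  linarith

lemma lower_real (hK2 : ∀ a b : Fin 2, G.Adj a b ↔ a ≠ b)
    (hW : Integrable (Function.uncurry W) (unif01.prod unif01))
    (hψ : Continuous (Function.uncurry fun y y' => φ ![y, y']))
    (Q : ∀ n : ℕ, Fin n → Fin n → ℝ) (C : ∀ n : ℕ, Fin n → Set ℝ)
    (hC : ∀ n, 1 ≤ n → Cells n (C n))
    (hcl : ∀ ε : ℝ, 0 < ε → ∀ᶠ n in atTop, ∀ ν : Measure (ℝ × X), inTM ν →
        |TT (stp (Q n) (C n)) (fun y y' => φ ![y, y']) ν - TT W (fun y y' => φ ![y, y']) ν| ≤ ε)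
    (F : Set ℝ) {ν : Measure (ℝ × X)} (hν : inTM ν)
    (hac : ν ≪ unif01.prod μ) (hi : Integrable (llr ν (unif01.prod μ)) ν)
    (hF : TT W (fun y y' => φ ![y, y']) ν ∈ interior F) {η : ℝ} (hη : 0 < η) :
    ∀ᶠ n : ℕ in atTop,
      ENNReal.ofReal (Real.exp (-(n * (∫ z, llr ν (unif01.prod μ) z ∂ν + η)))) ≤
      (Measure.pi fun _ : Fin n => μ) {x | Vstat G φ n (Q n) x ∈ F} := by
  have := hν.1
  set d := ∫ z, llr ν (unif01.prod μ) z ∂ν with hd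
  have hd0 : 0 ≤ d := llr_nonneg hac hi
  obtain ⟨ε, hε, hball⟩ := Metric.mem_nhds_iff.1 (mem_interior_iff_mem_nhds.1 hF)
  have hδ : 0 < η / (2 * (d + η)) := by positivity
  have hδ1 : η / (2 * (d + η)) ≤ 1 / 2 := by
    rw [div_le_div_iff₀ (by positivity) (by positivity)]; linarith
  have hlog : ∀ᶠ n : ℕ in atTop, Real.log 2 ≤ n * (η / 2) :=
    (tendsto_natCast_atTop_atTop.atTop_mul_const (by positivity : 0 < η / 2)).eventually_ge_atTop _
  filter_upwards [lower_event G hK2 hW hψ Q C hC hcl hν hε hδ, eventually_ge_atTop 1, hlog]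
    with n hn hn1 hl
  have h := hC n hn1
  set A := {x : Fin n → X | |Vstat G φ n (Q n) x - TT W (fun y y' => φ ![y, y']) ν| < ε} with hA
  have hAm : MeasurableSet A := by
    have := Vstat_measurable G hK2 hψ n (Q n)
    exact measurableSet_lt ((this.sub_const _).abs) measurable_const
  have hpos : 0 < (Measure.pi fun i => (n : ℝ≥0∞) • cm ν (C n i)).real A := by linarith
  have hcm := change_measure h hn1 μ hν hac hi hAm hpos
  have hAF : A ⊆ {x | Vstat G φ n (Q n) x ∈ F} := fun x hx => hball (by
    rw [Metric.mem_ball, Real.dist_eq]; exact hx)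
  refine le_trans ?_ (measure_mono hAF)
  rw [← ofReal_measureReal (measure_ne_top _ _)]
  apply ENNReal.ofReal_le_ofReal
  refine le_trans (Real.exp_le_exp.2 (neg_le_neg ?_)) hcm
  rw [div_le_iff₀ hpos]
  have hn0 : (0:ℝ) < n := by exact_mod_cast hn1
  have e : (d + η) * (1 - η / (2 * (d + η))) = d + η / 2 := by
    have : d + η ≠ 0 := by positivity
    field_simp; ring
  have h2 : n * (d + η) * (1 - η / (2 * (d + η))) ≤
      n * (d + η) * (Measure.pi fun i => (n : ℝ≥0∞) • cm ν (C n i)).real A :=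
    mul_le_mul_of_nonneg_left hn (by positivity)
  rw [mul_assoc, e] at h2
  linarith

lemma lower (hK2 : ∀ a b : Fin 2, G.Adj a b ↔ a ≠ b)
    (hW : Integrable (Function.uncurry W) (unif01.prod unif01))
    (hψ : Continuous (Function.uncurry fun y y' => φ ![y, y']))
    (Q : ∀ n : ℕ, Fin n → Fin n → ℝ) (C : ∀ n : ℕ, Fin n → Set ℝ)
    (hC : ∀ n, 1 ≤ n → Cells n (C n))
    (hcl : ∀ ε : ℝ, 0 < ε → ∀ᶠ n in atTop, ∀ ν : Measure (ℝ × X), inTM ν →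
        |TT (stp (Q n) (C n)) (fun y y' => φ ![y, y']) ν - TT W (fun y y' => φ ![y, y']) ν| ≤ ε)
    (F : Set ℝ) :
    -(⨅ x ∈ interior F, (rate0 G W φ μ x : EReal)) ≤
      Filter.atTop.liminf fun n : ℕ =>
        (((n : ℝ)⁻¹ : ℝ) : EReal) *
          ENNReal.log ((Measure.pi fun _ : Fin n => μ) {x | Vstat G φ n (Q n) x ∈ F}) := by
  rw [EReal.neg_le]
  refine le_iInf₂ fun t ht => ?_
  set L := Filter.atTop.liminf fun n : ℕ =>
        (((n : ℝ)⁻¹ : ℝ) : EReal) *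
          ENNReal.log ((Measure.pi fun _ : Fin n => μ) {x | Vstat G φ n (Q n) x ∈ F}) with hL
  have key : ∀ ν : {ν : Measure (ℝ × X) //
      inTM ν ∧ KLdiv ν (unif01.prod μ) ≠ ⊤ ∧ TWphi G W φ ν = t},
      -L ≤ (KLdiv ν.1 (unif01.prod μ) : EReal) := by
    rintro ⟨ν, hν, hk, hT⟩
    have := hν.1
    obtain ⟨hac, hi⟩ := KLdiv_ne_top hk
    have hd0 : 0 ≤ ∫ z, llr ν (unif01.prod μ) z ∂ν := llr_nonneg hac hi
    rw [TWphi_eq G hK2 W φ ν hν.1] at hT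
    simp only
    rw [KLdiv_of ⟨hac, hi⟩, EReal.coe_ennreal_ofReal, max_eq_left hd0]
    refine EReal.le_of_forall_lt_iff_le.1 fun z hz => ?_
    have hz' : ∫ z, llr ν (unif01.prod μ) z ∂ν < z := by exact_mod_cast hz
    have := log_lower (lower_real μ G hK2 hW hψ Q C hC hcl F hν hac hi (by rw [hT]; exact ht)
      (sub_pos.2 hz'))
    rw [add_sub_cancel] at this
    rw [EReal.neg_le]
    exact this
  by_cases hLt : -L ≤ 0
  · exact hLt.trans (EReal.coe_ennreal_nonneg _)
  · push Not at hLt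
    have : -L = ((-L).toENNReal : EReal) := (EReal.coe_toENNReal hLt.le).symm
    rw [this, EReal.coe_ennreal_le_coe_ennreal_iff]
    refine le_iInf fun ν => ?_
    rw [← EReal.coe_ennreal_le_coe_ennreal_iff, ← this]
    exact key ν

end
end EdgeLDP
end

/-- Theorem 1.2 (i): the edge case `H = K₂`. -/
theorem ldp_inhomogeneous_U_V_statistics_edge
    {X : Type*} [MetricSpace X] [CompactSpace X] [MeasurableSpace X] [BorelSpace X]
    (μ : Measure X) [IsProbabilityMeasure μ]
    (hnondeg : ∀ x : X, μ ≠ Measure.dirac x)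
    (G : SimpleGraph (Fin 2)) [DecidableRel G.Adj]
    (hK2 : ∀ a b : Fin 2, G.Adj a b ↔ a ≠ b)
    (φ : (Fin 2 → X) → ℝ) (hφ : Continuous φ)
    (Q : ∀ n : ℕ, Fin n → Fin n → ℝ)
    (hQsymm : ∀ n i j, Q n i j = Q n j i) (hQzero : ∀ n i, Q n i i = 0)
    (W : ℝ → ℝ → ℝ) (hWmeas : Measurable (Function.uncurry W))
    (hWsymm : ∀ x y, W x y = W y x)
    (hcut : Tendsto (fun n => weakCutDist (stepKernel n (Q n)) W) atTop (nhds 0))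
    (hnorm : Filter.atTop.limsup (fun n => kerNorm (stepKernel n (Q n)) 1) ≠ ⊤)
    (hWL1 : kerNorm W 1 ≠ ⊤) :
    SatisfiesLDP (fun n => Measure.pi fun _ : Fin n => μ)
      (fun n x => Ustat G φ n (Q n) x) (rate0 G W φ μ) ∧
    SatisfiesLDP (fun n => Measure.pi fun _ : Fin n => μ)
      (fun n x => Vstat G φ n (Q n) x) (rate0 G W φ μ) := by
  have hX : Nonempty X := nonempty_of_isProbabilityMeasure μ
  have hψ : Continuous (Function.uncurry fun y y' => φ ![y, y']) := by
    refine hφ.comp (continuous_pi fun i => ?_)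
    fin_cases i
    · exact continuous_fst
    · exact continuous_snd
  have hW := EdgeLDP.integrable_of_kerNorm hWmeas hWL1
  obtain ⟨C, hC, hcl⟩ := EdgeLDP.exists_cells Q W hWmeas hcut hnorm hWL1 hψ
  have hV : SatisfiesLDP (fun n => Measure.pi fun _ : Fin n => μ)
      (fun n x => Vstat G φ n (Q n) x) (rate0 G W φ μ) :=
    ⟨fun c hc => EdgeLDP.rate0_good μ G hK2 hW hψ c hc, fun F _ =>
      ⟨EdgeLDP.lower μ G hK2 hW hψ Q C hC hcl F, EdgeLDP.upper μ G hK2 hW hψ Q C hC hcl F⟩⟩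
  refine ⟨?_, hV⟩
  have hU : (fun n (x : Fin n → X) => Ustat G φ n (Q n) x) =
      fun n x => Vstat G φ n (Q n) x := by
    funext n x
    exact EdgeLDP.Ustat_eq G hK2 φ n (Q n) (hQzero n) x
  rw [hU]
  exact hV
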